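/- arXiv:1712.09674 — 4 statements merged into one kernel-verified Lean document; each statement's English description precedes it below -/
import Mathlib

section
/- Let d ≥ 1, l₁,…,l_d > 0, and let f : ℝ^d × [0,1] → [0,∞) be Lipschitz, periodic in x with periods l₁e₁,…,l_de_d (standard basis), with f(x,0) = f(x,1) = 0, and suppose there are θ ∈ (0,1/2) and θ' > 0 such that f(x,u) = 0 for all (x,u) with u ∈ [0,θ'], and for each x the map u ↦ f(x,u) is positive and non-increasing on (1−θ,1). Fix e ∈ S^{d−1} and suppose there is a pulsating front in direction e with speed c > 0: a C¹ function U : ℝ×ℝ^d → ℝ, periodic in its second argument with the above periods, with ∂_sU < 0 everywhere, 0 < U < 1, U(s,x) → 1 as s → −∞ and U(s,x) → 0 as s → +∞ uniformly in x, such that (t,x) ↦ U(x·e − ct, x) is C^{1,2} and solves u_t = Δu + f(x,u) classically on ℝ×ℝ^d. Then c is an exclusive front speed in direction e for u_t = Δu + f(x,u): (a) every solution u_e with initial datum (1−θ/2)·χ_{{x : x·e<0}} satisfies, for every compact K ⊆ {x : x·e > 0}, lim_{t→∞} inf_{x∈(ce−K)t} u_e(t,x) = 1 and lim_{t→∞}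 sup_{x∈(ce+K)t} u_e(t,x) = 0; and (b) for every compact K ⊆ {x : x·e > 0} there is α_K > 0 such that for all α ∈ (0,α_K], every solution u_{e,α} with initial datum χ_{{x·e<0}} + α·χ_{{x·e≥0}} satisfies limsup_{t→∞} sup_{x∈(ce+K)t} u_{e,α}(t,x) ≤ α. -/
open MeasureTheory Metric Set Filter
open scoped Topology RealInnerProductSpace NNReal Pointwise

noncomputable section

/-- `d`-dimensional Euclidean space. -/
abbrev Euc (d : ℕ) : Type := EuclideanSpace ℝ (Fin d)

/-- The spatial Laplacian of `φ : ℝ^d → ℝ`. -/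
def lap {d : ℕ} (φ : Euc d → ℝ) (x : Euc d) : ℝ :=
  ∑ i : Fin d,
    fderiv ℝ (fun y => fderiv ℝ φ y (EuclideanSpace.single i 1)) x (EuclideanSpace.single i 1)

/-- A classical solution `u : [0,∞)×ℝ^d → [0,1]` of `u_t = Δu + F(x,u)` with initial
datum `g`: continuous and `C^{1,2}` in space for `t>0`, solving the equation classically for
`t>0`, with `u(0,·) = g` and `u(t,x) → g(x₀)` as `(t,x) → (0⁺,x₀)` at continuity points of `g`. -/
structure IsSolR {d : ℕ} (F : Euc d → ℝ → ℝ) (g : Euc d → ℝ) (u : ℝ → Euc d → ℝ) : Prop where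
  mem_Icc : ∀ t x, 0 ≤ t → u t x ∈ Icc (0:ℝ) 1
  contOn : ContinuousOn (fun p : ℝ × Euc d => u p.1 p.2) (Ioi 0 ×ˢ univ)
  spatial : ∀ t, 0 < t → ContDiff ℝ 2 (u t)
  eqn : ∀ t x, 0 < t → HasDerivAt (fun s => u s x) (lap (u t) x + F x (u t x)) t
  init : ∀ x, u 0 x = g x
  initLim : ∀ x₀ : Euc d, ContinuousAt g x₀ →
    Tendsto (fun p : ℝ × Euc d => u p.1 p.2) ((𝓝[>] (0:ℝ)) ×ˢ 𝓝 x₀) (𝓝 (g x₀))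

/-- Hypothesis (H1). -/
structure H1 {d : ℕ} {Ω : Type*} (f : Euc d → ℝ → Ω → ℝ) (f₀ : ℝ → ℝ) (M θ₀ : ℝ) : Prop where
  M_ge_one : 1 ≤ M
  lip : ∀ x x' : Euc d, ∀ u u' : ℝ, ∀ ω : Ω, u ∈ Icc (0:ℝ) 1 → u' ∈ Icc (0:ℝ) 1 →
    |f x u ω - f x' u' ω| ≤ M * (‖x - x'‖ + |u - u'|)
  nonneg : ∀ x u ω, u ∈ Icc (0:ℝ) 1 → 0 ≤ f x u ω
  zero_at_zero : ∀ x ω, f x 0 ω = 0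
  zero_at_one : ∀ x ω, f x 1 ω = 0
  theta_mem : θ₀ ∈ Ioo (0:ℝ) 1
  f0_lip : ∃ L : ℝ≥0, LipschitzOnWith L f₀ (Icc 0 1)
  f0_nonneg : ∀ u ∈ Icc (0:ℝ) 1, 0 ≤ f₀ u
  f0_zero_low : ∀ u ∈ Icc (0:ℝ) θ₀, f₀ u = 0
  f0_zero_one : f₀ 1 = 0
  f0_pos : ∀ u ∈ Ioo θ₀ 1, 0 < f₀ u
  f0_le : ∀ x u ω, u ∈ Icc (0:ℝ) 1 → f₀ u ≤ f x u ω

/-- `c₀` is the traveling front speed of the homogeneous reaction `f₀`. -/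
def IsTravelingFrontSpeed (f₀ : ℝ → ℝ) (c₀ : ℝ) : Prop :=
  ∃ U₀ U₀' : ℝ → ℝ, StrictAnti U₀ ∧ (∀ s, U₀ s ∈ Ioo (0:ℝ) 1) ∧
    (∀ s, HasDerivAt U₀ (U₀' s) s) ∧
    (∀ s, HasDerivAt U₀' (-(c₀ * U₀' s) - f₀ (U₀ s)) s) ∧
    Tendsto U₀ atBot (𝓝 1) ∧ Tendsto U₀ atTop (𝓝 0)

/-- `γ_f(x,ω;ζ) = inf{u ≥ 0 : f(x,u,ω) > ζu}`. -/
def gammaF {d : ℕ} {Ω : Type*} (f : Euc d → ℝ → Ω → ℝ) (ζ : ℝ) (x : Euc d) (ω : Ω) : ℝ :=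
  sInf {u : ℝ | 0 ≤ u ∧ ζ * u < f x u ω}

/-- `f ∈ F(f₀,M,ζ,ξ)`: the lower bound `f ≥ ξ` on `[γ_f(x,ω;ζ),θ₀]` (the (H1)-part is
recorded separately by `H1`). -/
def memF {d : ℕ} {Ω : Type*} (f : Euc d → ℝ → Ω → ℝ) (θ₀ ζ ξ : ℝ) : Prop :=
  ∀ x ω, {u : ℝ | 0 ≤ u ∧ ζ * u < f x u ω}.Nonempty →
    ∀ u ∈ Icc (gammaF f ζ x ω) θ₀, ξ ≤ f x u ω

/-- `R₀` is admissible: every solution of `v_t = Δv + f₀(v)` with initial datum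
`((1+θ₀)/2)χ_{B_{R₀}(0)}` converges to `1` locally uniformly as `t → ∞`. -/
def Admissible (d : ℕ) (f₀ : ℝ → ℝ) (θ₀ R₀ : ℝ) : Prop :=
  ∀ v : ℝ → Euc d → ℝ,
    IsSolR (fun (_ : Euc d) u => f₀ u)
      ((ball (0:Euc d) R₀).indicator fun _ => (1+θ₀)/2) v →
    TendstoLocallyUniformly (fun t x => v t x) (fun _ => (1:ℝ)) atTop

/-- The Wulff-shape set `S = {se : e ∈ S^{d-1}, 0 ≤ s < w(e)}` of a radial function `w`. -/
def wulff {d : ℕ} (w : Euc d → ℝ) : Set (Euc d) :=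
  {x | ∃ e ∈ sphere (0:Euc d) 1, ∃ s : ℝ, 0 ≤ s ∧ s < w e ∧ x = s • e}

/-- `S` is a deterministic Wulff shape for `u_t = Δu + f(x,u,ω)`. -/
def DetWulff {d : ℕ} {Ω : Type*} [MeasurableSpace Ω] (P : Measure Ω)
    (f : Euc d → ℝ → Ω → ℝ) (f₀ : ℝ → ℝ) (θ₀ : ℝ) (S : Set (Euc d)) : Prop :=
  ∃ Ω₀ : Set Ω, MeasurableSet Ω₀ ∧ P Ω₀ = 1 ∧ ∀ ω ∈ Ω₀, ∀ R₀ : ℝ, 0 < R₀ →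
    Admissible d f₀ θ₀ R₀ →
    ∀ u : ℝ → Euc d → ℝ,
      IsSolR (fun x v => f x v ω) ((ball (0:Euc d) R₀).indicator fun _ => (1+θ₀)/2) u →
      ∀ δ : ℝ, 0 < δ →
        (∀ ε : ℝ, 0 < ε → ∃ T : ℝ, ∀ t ≥ T, ∀ x ∈ ((1-δ)*t) • S, 1 - ε ≤ u t x) ∧
        (∀ ε : ℝ, 0 < ε → ∃ T : ℝ, ∀ x : Euc d, ∀ t ≥ T, x ∉ ((1+δ)*t) • S → u t x ≤ ε)

/-- `c` is a deterministic front speed in direction `e` for `u_t = Δu + f(x,u,ω)`. -/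
def DetFrontSpeed {d : ℕ} {Ω : Type*} [MeasurableSpace Ω] (P : Measure Ω)
    (f : Euc d → ℝ → Ω → ℝ) (θ₀ : ℝ) (e : Euc d) (c : ℝ) : Prop :=
  ∃ Ω₀ : Set Ω, MeasurableSet Ω₀ ∧ P Ω₀ = 1 ∧ ∀ ω ∈ Ω₀,
    ∀ u : ℝ → Euc d → ℝ,
      IsSolR (fun x v => f x v ω)
        ({x : Euc d | ⟪x, e⟫ < 0}.indicator fun _ => (1+θ₀)/2) u →
      ∀ K : Set (Euc d), IsCompact K → K ⊆ {x : Euc d | 0 < ⟪x, e⟫} →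
        (∀ ε : ℝ, 0 < ε → ∃ T : ℝ, ∀ t ≥ T, ∀ k ∈ K, 1 - ε ≤ u t (t • (c • e - k))) ∧
        (∀ ε : ℝ, 0 < ε → ∃ T : ℝ, ∀ t ≥ T, ∀ k ∈ K, u t (t • (c • e + k)) ≤ ε)

/-- `c` is a deterministic exclusive front speed in direction `e`. -/
def DetExclFrontSpeed {d : ℕ} {Ω : Type*} [MeasurableSpace Ω] (P : Measure Ω)
    (f : Euc d → ℝ → Ω → ℝ) (θ₀ : ℝ) (e : Euc d) (c : ℝ) : Prop :=
  DetFrontSpeed P f θ₀ e c ∧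
  ∀ K : Set (Euc d), IsCompact K → K ⊆ {x : Euc d | 0 < ⟪x, e⟫} →
    ∃ β : ℝ → ℝ, (∀ α ∈ Ioc (0:ℝ) 1, β α ∈ Ioc (0:ℝ) 1) ∧
      Tendsto β (𝓝[>] (0:ℝ)) (𝓝 0) ∧
      ∃ Ω₀ : Set Ω, MeasurableSet Ω₀ ∧ P Ω₀ = 1 ∧ ∀ ω ∈ Ω₀, ∀ α ∈ Ioc (0:ℝ) 1,
        ∀ u : ℝ → Euc d → ℝ,
          IsSolR (fun x v => f x v ω) (fun x => if ⟪x, e⟫ < 0 then 1 else α) u →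
          ∀ ε : ℝ, 0 < ε → ∃ T : ℝ, ∀ t ≥ T, ∀ k ∈ K, u t (t • (c • e + k)) ≤ β α + ε

/-!
Fife–McLeod method. Let `W s` be the profile of the front sitting at `x · e = s`. Moving the front
slightly faster and raising it by a small constant `q` gives a supersolution `W ((c + A) t) + q`:
where the values are close to `0` or `1` the reaction is non-increasing, so raising them does not
increase it, and at intermediate values the gain `A ∂ₛW` from the extra speed dominates the
Lipschitz error `L q`. Likewise `W` moved slightly slower and lowered by `q + r` is a subsolution.
Here `r` must be of order `θ` at time `0`, so it is made to decay exponentially: near the value `1`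
the decay is paid for by the positivity of the reaction just below `1`, elsewhere by a bounded
further delay of the front. The comparison principle traps solutions between the two.
-/

section Calculus

variable {d : ℕ} {φ ψ : Euc d → ℝ}

open Laplacian in
lemma lap_eq_laplacian (hφ : ContDiff ℝ 2 φ) : lap φ = Δ φ := by
  funext x
  rw [InnerProductSpace.laplacian_eq_iteratedFDeriv_orthonormalBasis φ
    (EuclideanSpace.basisFun (Fin d) ℝ), lap]
  refine Finset.sum_congr rfl fun i _ => ?_
  have hdiff : DifferentiableAt ℝ (fderiv ℝ φ) x :=
    (hφ.fderiv_right (m := 1) (by norm_num)).differentiable (by norm_num) x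
  simp [iteratedFDeriv_two_apply, fderiv_clm_apply hdiff (differentiableAt_const _)]

lemma lap_add (hφ : ContDiff ℝ 2 φ) (hψ : ContDiff ℝ 2 ψ) (x : Euc d) :
    lap (fun y => φ y + ψ y) x = lap φ x + lap ψ x := by
  rw [lap_eq_laplacian hφ, lap_eq_laplacian hψ, lap_eq_laplacian (hφ.add hψ)]
  exact hφ.contDiffAt.laplacian_add hψ.contDiffAt

lemma lap_sub (hφ : ContDiff ℝ 2 φ) (hψ : ContDiff ℝ 2 ψ) (x : Euc d) :
    lap (fun y => φ y - ψ y) x = lap φ x - lap ψ x := by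
  rw [lap_eq_laplacian hφ, lap_eq_laplacian hψ, lap_eq_laplacian (hφ.sub hψ)]
  exact hφ.contDiffAt.laplacian_sub hψ.contDiffAt

lemma lap_const_mul (a : ℝ) (hφ : ContDiff ℝ 2 φ) (x : Euc d) :
    lap (fun y => a * φ y) x = a * lap φ x := by
  rw [lap_eq_laplacian hφ, lap_eq_laplacian (contDiff_const.mul hφ)]
  exact InnerProductSpace.laplacian_smul a hφ.contDiffAt

lemma lap_add_const (φ : Euc d → ℝ) (a : ℝ) (x : Euc d) :
    lap (fun y => φ y + a) x = lap φ x := by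
  simp only [lap, fderiv_add_const]

lemma lap_norm_sq (x : Euc d) : lap (fun y => ‖y‖ ^ 2) x = 2 * d := by
  have hsecond (v : Euc d) :
      fderiv ℝ (fun y => fderiv ℝ (fun z : Euc d => ‖z‖ ^ 2) y v) x v = 2 * ‖v‖ ^ 2 := by
    have hfirst : (fun y => fderiv ℝ (fun z : Euc d => ‖z‖ ^ 2) y v)
        = ⇑((2 : ℝ) • innerSL ℝ v) := by
      funext y
      simp [fderiv_norm_sq_apply, real_inner_comm]
    rw [hfirst, ContinuousLinearMap.fderiv]
    simp
  simp only [lap, hsecond]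
  simp [mul_comm]

lemma deriv_deriv_nonneg_of_isLocalMin {h : ℝ → ℝ} {a : ℝ} (hmin : IsLocalMin h a)
    (hcont : ContinuousAt h a) : 0 ≤ deriv (deriv h) a := by
  by_contra! hneg
  have hmax := isLocalMax_of_deriv_deriv_neg hneg hmin.deriv_eq_zero hcont
  have hconst : h =ᶠ[𝓝 a] fun _ => h a := by
    filter_upwards [hmin, hmax] with r hr hr' using le_antisymm hr' hr
  have hzero : deriv (deriv h) a = 0 := by
    rw [hconst.deriv.deriv_eq]
    simp
  exact hneg.ne hzero

lemma lap_nonneg_of_isLocalMin {x : Euc d} (hφ : ContDiff ℝ 2 φ) (hmin : IsLocalMin φ x) :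
    0 ≤ lap φ x := by
  refine Finset.sum_nonneg fun i _ => ?_
  set v : Euc d := EuclideanSpace.single i 1
  have hline (r : ℝ) : HasDerivAt (fun r : ℝ => x + r • v) v r := by
    simpa using ((hasDerivAt_id r).smul_const v).const_add x
  have hfirst : deriv (fun r : ℝ => φ (x + r • v)) = fun r => fderiv ℝ φ (x + r • v) v :=
    funext fun r =>
      (((hφ.differentiable (by norm_num) _).hasFDerivAt).comp_hasDerivAt r (hline r)).deriv
  have hφ' : ContDiff ℝ 1 fun y => fderiv ℝ φ y v :=
    (hφ.fderiv_right (by norm_num)).clm_apply contDiff_const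
  have hsecond : deriv (deriv fun r : ℝ => φ (x + r • v)) 0
      = fderiv ℝ (fun y => fderiv ℝ φ y v) x v := by
    rw [hfirst]
    simpa [Function.comp_def] using
      (((hφ'.differentiable (by norm_num) _).hasFDerivAt).comp_hasDerivAt 0 (hline 0)).deriv
  have hx : Tendsto (fun r : ℝ => x + r • v) (𝓝 0) (𝓝 x) := by
    simpa using (hline 0).continuousAt.tendsto
  have hmin_line : IsLocalMin (fun r : ℝ => φ (x + r • v)) 0 := by
    simpa [IsLocalMin, IsMinFilter] using hx.eventually hmin
  rw [← hsecond]
  exact deriv_deriv_nonneg_of_isLocalMin hmin_line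
    (hφ.continuous.continuousAt.comp (hline 0).continuousAt)

lemma deriv_nonpos_of_isLocalMinOn_Iic {h : ℝ → ℝ} {h' a : ℝ} (hmin : IsLocalMinOn h (Iic a) a)
    (hh : HasDerivAt h h' a) : h' ≤ 0 := by
  have hdir : (-1 : ℝ) ∈ posTangentConeAt (Iic a) a := by
    refine mem_posTangentConeAt_of_frequently_mem (Eventually.frequently ?_)
    filter_upwards [self_mem_nhdsWithin] with r hr
    simpa using le_of_lt hr
  simpa using hmin.hasFDerivWithinAt_nonneg hh.hasFDerivAt.hasFDerivWithinAt hdir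

lemma hasDerivAt_const_mul_exp (r₀ k t : ℝ) :
    HasDerivAt (fun t => r₀ * Real.exp (k * t)) (k * (r₀ * Real.exp (k * t))) t :=
  ((((hasDerivAt_id t).const_mul k).exp).const_mul r₀).congr_deriv (by
    simp only [id]
    ring)

lemma exists_decaying_shift (a s₀ : ℝ) {B ρ r₀ : ℝ} (hρ : 0 < ρ) (hB : 0 ≤ B) (hr₀ : 0 ≤ r₀) :
    ∃ σ : ℝ → ℝ, σ 0 = s₀ ∧
      (∀ t, HasDerivAt σ (a - B * (r₀ * Real.exp (-ρ * t))) t) ∧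
      ∀ t, s₀ - B / ρ * r₀ + a * t ≤ σ t := by
  refine ⟨fun t => s₀ + a * t + B / ρ * (r₀ * Real.exp (-ρ * t) - r₀), by simp, fun t => ?_,
    fun t => ?_⟩
  · refine ((((hasDerivAt_id t).const_mul a).const_add s₀).add
      (((hasDerivAt_const_mul_exp r₀ (-ρ) t).sub_const r₀).const_mul (B / ρ))).congr_deriv ?_
    field_simp
    ring
  · have hterm : 0 ≤ B / ρ * (r₀ * Real.exp (-ρ * t)) := by positivity
    linarith

end Calculus

/-- `u` is a classical function on `(0,∞) × ℝ^d` with time derivative `u'`: jointly continuous,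
`C²` in space and differentiable in time. This is the regularity the comparison arguments need;
nothing is required of `u` at times `t ≤ 0`. -/
structure IsClassical {d : ℕ} (u u' : ℝ → Euc d → ℝ) : Prop where
  continuousOn : ContinuousOn (fun p : ℝ × Euc d => u p.1 p.2) (Ioi 0 ×ˢ univ)
  contDiff : ∀ t, 0 < t → ContDiff ℝ 2 (u t)
  hasDerivAt : ∀ t x, 0 < t → HasDerivAt (fun s => u s x) (u' t x) t

/-- The ordering `v ≤ V` at the initial time, understood as a limit as `(t, x) → (0⁺, x₀)` for
each `x₀`, so that it makes sense for discontinuous initial data. -/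
def InitiallyLE {d : ℕ} (v V : ℝ → Euc d → ℝ) : Prop :=
  ∀ x₀ : Euc d, ∀ η : ℝ, 0 < η →
    ∀ᶠ p : ℝ × Euc d in 𝓝[>] (0 : ℝ) ×ˢ 𝓝 x₀, v p.1 p.2 - η < V p.1 p.2

section MaximumPrinciple

variable {d : ℕ} {u u' v v' w w' V V' : ℝ → Euc d → ℝ}

lemma IsClassical.add (hu : IsClassical u u') (hv : IsClassical v v') :
    IsClassical (fun t x => u t x + v t x) (fun t x => u' t x + v' t x) where
  continuousOn := hu.continuousOn.add hv.continuousOn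
  contDiff t ht := (hu.contDiff t ht).add (hv.contDiff t ht)
  hasDerivAt t x ht := (hu.hasDerivAt t x ht).add (hv.hasDerivAt t x ht)

lemma IsClassical.sub (hu : IsClassical u u') (hv : IsClassical v v') :
    IsClassical (fun t x => u t x - v t x) (fun t x => u' t x - v' t x) where
  continuousOn := hu.continuousOn.sub hv.continuousOn
  contDiff t ht := (hu.contDiff t ht).sub (hv.contDiff t ht)
  hasDerivAt t x ht := (hu.hasDerivAt t x ht).sub (hv.hasDerivAt t x ht)

lemma IsClassical.time_mul {a a' : ℝ → ℝ} (ha : ∀ t, HasDerivAt a (a' t) t)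
    (hu : IsClassical u u') :
    IsClassical (fun t x => a t * u t x) (fun t x => a' t * u t x + a t * u' t x) where
  continuousOn := by
    have hcont : Continuous a := continuous_iff_continuousAt.2 fun t => (ha t).continuousAt
    exact (hcont.comp continuous_fst).continuousOn.mul hu.continuousOn
  contDiff t ht := contDiff_const.mul (hu.contDiff t ht)
  hasDerivAt t x ht := (ha t).mul (hu.hasDerivAt t x ht)

lemma IsSolR.isClassical {f : Euc d → ℝ → ℝ} {g : Euc d → ℝ} (hu : IsSolR f g u) :
    IsClassical u fun t x => lap (u t) x + f x (u t x) :=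
  ⟨hu.contOn, hu.spatial, hu.eqn⟩

theorem nonneg_on_cylinder {C : Set (Euc d)} {a b : ℝ} (ha : 0 < a) (hC : IsCompact C)
    (hw : IsClassical w w')
    (hsuper : ∀ t x, 0 < t → w t x < 0 → lap (w t) x < w' t x)
    (hbottom : ∀ x ∈ C, 0 ≤ w a x)
    (hside : ∀ t ∈ Icc a b, ∀ x ∈ frontier C, 0 ≤ w t x) :
    ∀ t ∈ Icc a b, ∀ x ∈ C, 0 ≤ w t x := by
  intro t₁ ht₁ x₁ hx₁
  by_contra! hneg
  have hcont : ContinuousOn (fun p : ℝ × Euc d => w p.1 p.2) (Icc a b ×ˢ C) :=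
    hw.continuousOn.mono fun p hp => ⟨ha.trans_le hp.1.1, mem_univ _⟩
  obtain ⟨⟨t, x⟩, ⟨ht, hx⟩, hmin⟩ :=
    (isCompact_Icc.prod hC).exists_isMinOn ⟨(t₁, x₁), ht₁, hx₁⟩ hcont
  have hle (s : ℝ) (hs : s ∈ Icc a b) (y : Euc d) (hy : y ∈ C) : w t x ≤ w s y :=
    hmin (a := (s, y)) ⟨hs, hy⟩
  have hwneg : w t x < 0 := (hle t₁ ht₁ x₁ hx₁).trans_lt hneg
  have ht_gt : a < t := ht.1.lt_of_ne fun h => (hbottom x hx).not_gt (h ▸ hwneg)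
  have hx_int : x ∈ interior C :=
    (self_sdiff_frontier C).subset ⟨hx, fun h => (hside t ht x h).not_gt hwneg⟩
  have ht0 : 0 < t := ha.trans ht_gt
  have hlap : 0 ≤ lap (w t) x := by
    refine lap_nonneg_of_isLocalMin (hw.contDiff t ht0) ?_
    filter_upwards [mem_interior_iff_mem_nhds.1 hx_int] with y hy using hle t ht y hy
  have htime : w' t x ≤ 0 := by
    refine deriv_nonpos_of_isLocalMinOn_Iic ?_ (hw.hasDerivAt t x ht0)
    filter_upwards [mem_nhdsWithin_of_mem_nhds (Ioi_mem_nhds ht_gt), self_mem_nhdsWithin]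
      with s hsa hst using hle s ⟨le_of_lt hsa, le_trans hst ht.2⟩ x hx
  linarith [hsuper t x ht0 hwneg]

lemma InitiallyLE.eventually_forall_mem_isCompact (h : InitiallyLE v V) {C : Set (Euc d)}
    (hC : IsCompact C) {η : ℝ} (hη : 0 < η) :
    ∀ᶠ t in 𝓝[>] (0 : ℝ), ∀ x ∈ C, v t x - η < V t x := by
  have hprod : {p : ℝ × Euc d | v p.1 p.2 - η < V p.1 p.2} ∈ 𝓝[>] (0 : ℝ) ×ˢ 𝓝ˢ C :=
    hC.mem_prod_nhdsSet_of_forall fun x _ => h x η hη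
  obtain ⟨S, hS, N, hN, hSN⟩ := mem_prod_iff.1 hprod
  filter_upwards [hS] with t ht x hx
  exact hSN (mk_mem_prod ht (subset_of_mem_nhdsSet hN hx))

lemma isClassical_barrier (η : ℝ) :
    IsClassical (fun t (x : Euc d) => η * (1 + ‖x‖ ^ 2 + (2 * d + 1) * t))
      fun _ _ => η * (2 * d + 1) where
  continuousOn := by fun_prop
  contDiff t _ := contDiff_const.mul
    ((contDiff_const.add (contDiff_norm_sq ℝ)).add contDiff_const)
  hasDerivAt t x _ := by
    simpa using (((hasDerivAt_id t).const_mul (2 * (d : ℝ) + 1)).const_add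
      (1 + ‖x‖ ^ 2)).const_mul η

lemma lap_barrier (η t : ℝ) (x : Euc d) :
    lap (fun y : Euc d => η * (1 + ‖y‖ ^ 2 + (2 * d + 1) * t)) x = η * (2 * d) := by
  have hrw : (fun y : Euc d => η * (1 + ‖y‖ ^ 2 + (2 * d + 1) * t))
      = fun y => η * ‖y‖ ^ 2 + η * (1 + (2 * d + 1) * t) := by
    funext y
    ring
  rw [hrw, lap_add_const, lap_const_mul η (contDiff_norm_sq ℝ), lap_norm_sq]

lemma add_barrier_nonneg_of_supersolution {M η : ℝ} (hη : 0 < η) (hw : IsClassical w w')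
    (hbdd : ∀ t x, 0 < t → -M ≤ w t x)
    (hsuper : ∀ t x, 0 < t → w t x < 0 → lap (w t) x ≤ w' t x)
    (hinit : InitiallyLE (fun _ _ => 0) w) {T : ℝ} (hT : 0 < T) (x : Euc d) :
    0 ≤ w T x + η * (1 + ‖x‖ ^ 2 + (2 * d + 1) * T) := by
  obtain ⟨R, hxR, hMR⟩ : ∃ R : ℝ, ‖x‖ < R ∧ M < η * R ^ 2 := by
    have hlarge : Tendsto (fun R : ℝ => η * R ^ 2) atTop atTop :=
      (tendsto_pow_atTop two_ne_zero).const_mul_atTop hη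
    exact ((eventually_gt_atTop ‖x‖).and (hlarge.eventually_gt_atTop M)).exists
  have hR0 : R ≠ 0 := ((norm_nonneg x).trans_lt hxR).ne'
  obtain ⟨a, hsmall, ha0, haT⟩ := ((hinit.eventually_forall_mem_isCompact
    (isCompact_closedBall (0 : Euc d) R) hη).and (Ioo_mem_nhdsGT hT)).exists
  refine nonneg_on_cylinder ha0 (isCompact_closedBall (0 : Euc d) R)
    (hw.add (isClassical_barrier η)) ?_ ?_ ?_ T ⟨haT.le, le_rfl⟩ x (by simpa using hxR.le)
  · intro t y ht hneg
    rw [lap_add (hw.contDiff t ht) ((isClassical_barrier η).contDiff t ht), lap_barrier]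
    have hbarrier : 0 ≤ η * (1 + ‖y‖ ^ 2 + (2 * d + 1) * t) := by positivity
    linarith [hsuper t y ht (by linarith)]
  · intro y hy
    have hbarrier : 0 ≤ η * (‖y‖ ^ 2 + (2 * d + 1) * a) := by positivity
    linarith [hsmall y hy]
  · intro t ht y hy
    have hyR : ‖y‖ = R := by simpa [frontier_closedBall _ hR0] using hy
    have ht0 : 0 < t := ha0.trans_le ht.1
    have hbarrier : 0 ≤ η * (1 + (2 * d + 1) * t) := by positivity
    rw [hyR]
    linarith [hbdd t y ht0]

lemma nonneg_of_supersolution_heat {M : ℝ} (hw : IsClassical w w')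
    (hbdd : ∀ t x, 0 < t → -M ≤ w t x)
    (hsuper : ∀ t x, 0 < t → w t x < 0 → lap (w t) x ≤ w' t x)
    (hinit : InitiallyLE (fun _ _ => 0) w) {t : ℝ} (ht : 0 < t) (x : Euc d) : 0 ≤ w t x := by
  have hlim : Tendsto (fun η : ℝ => w t x + η * (1 + ‖x‖ ^ 2 + (2 * d + 1) * t))
      (𝓝[>] 0) (𝓝 (w t x)) := by
    have hcont : Continuous fun η : ℝ => w t x + η * (1 + ‖x‖ ^ 2 + (2 * d + 1) * t) := by
      fun_prop
    simpa using (hcont.tendsto 0).mono_left nhdsWithin_le_nhds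
  refine ge_of_tendsto hlim ?_
  filter_upwards [self_mem_nhdsWithin] with η hη
  exact add_barrier_nonneg_of_supersolution hη hw hbdd hsuper hinit ht x

theorem nonneg_of_supersolution {K M : ℝ} (hK : 0 ≤ K) (hM : 0 ≤ M) (hw : IsClassical w w')
    (hbdd : ∀ t x, 0 < t → -M ≤ w t x)
    (hsuper : ∀ t x, 0 < t → w t x < 0 → lap (w t) x + K * w t x ≤ w' t x)
    (hinit : InitiallyLE (fun _ _ => 0) w) {t : ℝ} (ht : 0 < t) (x : Euc d) : 0 ≤ w t x := by
  have hexp (t : ℝ) : HasDerivAt (fun t => Real.exp (-K * t)) (-K * Real.exp (-K * t)) t := by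
    simpa using hasDerivAt_const_mul_exp 1 (-K) t
  have hexp_le (t : ℝ) (ht : 0 < t) : Real.exp (-K * t) ≤ 1 :=
    Real.exp_le_one_iff.2 (by nlinarith)
  have hmul_ge {t m : ℝ} {x : Euc d} (ht : 0 < t) (hm : 0 ≤ m) (h : -m ≤ w t x) :
      -m ≤ Real.exp (-K * t) * w t x := by
    nlinarith [hexp_le t ht, Real.exp_pos (-K * t)]
  refine nonneg_of_mul_nonneg_right (nonneg_of_supersolution_heat (M := M) (hw.time_mul hexp)
    (fun t x ht => hmul_ge ht hM (hbdd t x ht)) ?_ ?_ ht x) (Real.exp_pos _)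
  · intro t x ht hneg
    have hwneg : w t x < 0 := (pos_iff_neg_of_mul_neg hneg).1 (Real.exp_pos _)
    rw [lap_const_mul _ (hw.contDiff t ht)]
    linarith [mul_le_mul_of_nonneg_left (hsuper t x ht hwneg) (Real.exp_pos (-K * t)).le]
  · intro x₀ η hη
    have hpos : ∀ᶠ t in 𝓝[>] (0 : ℝ), 0 < t := self_mem_nhdsWithin
    filter_upwards [hinit x₀ (η / 2) (by positivity), hpos.prod_inl _] with p hp hp0
    linarith [hmul_ge (x := p.2) hp0 (m := η / 2) (by positivity) (by linarith)]

theorem comparison_principle {f : Euc d → ℝ → ℝ} {L : ℝ≥0}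
    (hf : ∀ x, LipschitzOnWith L (f x) (Icc 0 1)) (hv : IsClassical v v') (hV : IsClassical V V')
    (hv_le : ∀ t x, 0 < t → v t x ≤ 1) (hV_nonneg : ∀ t x, 0 < t → 0 ≤ V t x)
    (hsub : ∀ t x, 0 < t → V t x < v t x → v' t x ≤ lap (v t) x + f x (v t x))
    (hsuper : ∀ t x, 0 < t → V t x < v t x → lap (V t) x + f x (V t x) ≤ V' t x)
    (hinit : InitiallyLE v V) {t : ℝ} (ht : 0 < t) (x : Euc d) : v t x ≤ V t x := by
  refine sub_nonneg.1 (nonneg_of_supersolution (M := 1) L.coe_nonneg zero_le_one (hV.sub hv)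
    ?_ ?_ ?_ ht x)
  · intro t x ht
    linarith [hv_le t x ht, hV_nonneg t x ht]
  · intro t x ht hneg
    have hlt : V t x < v t x := sub_neg.1 hneg
    have hV_mem : V t x ∈ Icc (0 : ℝ) 1 := ⟨hV_nonneg t x ht, hlt.le.trans (hv_le t x ht)⟩
    have hv_mem : v t x ∈ Icc (0 : ℝ) 1 := ⟨(hV_nonneg t x ht).trans hlt.le, hv_le t x ht⟩
    have hlip : f x (v t x) - f x (V t x) ≤ L * (v t x - V t x) := by
      have h := (hf x).dist_le_mul _ hv_mem _ hV_mem
      rw [Real.dist_eq, Real.dist_eq, abs_of_pos (sub_pos.2 hlt)] at h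
      exact (le_abs_self _).trans h
    rw [lap_sub (hV.contDiff t ht) (hv.contDiff t ht)]
    linarith [hsub t x ht hlt, hsuper t x ht hlt]
  · intro x₀ η hη
    filter_upwards [hinit x₀ η hη] with p hp
    linarith

end MaximumPrinciple

/-- Reactions that are monotone near both rest states and uniformly positive just below `1`. This
covers ignition reactions as well as bistable ones. All constants are uniform in `x`, which
replaces periodicity. -/
structure IsBistableType {d : ℕ} (f : Euc d → ℝ → ℝ) (L : ℝ≥0) (θ θ' : ℝ) : Prop where
  θ_mem : θ ∈ Ioo (0 : ℝ) 1
  θ'_pos : 0 < θ'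
  lipschitz : ∀ x, LipschitzOnWith L (f x) (Icc 0 1)
  map_one : ∀ x, f x 1 = 0
  antitone_low : ∀ x, AntitoneOn (f x) (Icc 0 θ')
  antitone_high : ∀ x, AntitoneOn (f x) (Ioo (1 - θ) 1)
  exists_pos_le : ∀ v ∈ Ioo (1 - θ) 1, ∃ m > 0, ∀ x, m ≤ f x v

section Reaction

variable {d : ℕ} {f : Euc d → ℝ → ℝ} {L : ℝ≥0} {θ θ' : ℝ}

lemma IsBistableType.apply_sub_apply_le (hf : IsBistableType f L θ θ') {v w b : ℝ} (hv : 0 ≤ v)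
    (hvw : v ≤ w) (hw : w < 1) (hb : 0 ≤ b) (hmid : θ' < w → v ≤ 1 - θ → L * (w - v) ≤ b)
    (x : Euc d) : f x w - f x v ≤ b := by
  rcases le_or_gt w θ' with hlow | hlow
  · linarith [hf.antitone_low x ⟨hv, hvw.trans hlow⟩ ⟨hv.trans hvw, hlow⟩ hvw]
  rcases lt_or_ge (1 - θ) v with hhigh | hhigh
  · linarith [hf.antitone_high x ⟨hhigh, hvw.trans_lt hw⟩ ⟨hhigh.trans_le hvw, hw⟩ hvw]
  have hlip := (hf.lipschitz x).dist_le_mul w ⟨hv.trans hvw, hw.le⟩ v ⟨hv, hvw.trans hw.le⟩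
  rw [Real.dist_eq, Real.dist_eq, abs_of_nonneg (sub_nonneg.2 hvw)] at hlip
  exact (le_abs_self _).trans (hlip.trans (hmid hlow hhigh))

lemma IsBistableType.apply_le_mul_one_sub (hf : IsBistableType f L θ θ') {w : ℝ}
    (hw : w ∈ Icc (0 : ℝ) 1) (x : Euc d) : f x w ≤ L * (1 - w) := by
  have hlip := (hf.lipschitz x).dist_le_mul w hw 1 ⟨zero_le_one, le_rfl⟩
  rw [hf.map_one, Real.dist_0_eq_abs, dist_comm, Real.dist_eq,
    abs_of_nonneg (sub_nonneg.2 hw.2)] at hlip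
  exact (le_abs_self _).trans hlip

lemma IsBistableType.exists_gain_near_one (hf : IsBistableType f L θ θ') {q₁ q₂ : ℝ}
    (hq₁ : 0 < q₁) (hq : q₁ ≤ q₂) (hq₂ : q₂ < θ) :
    ∃ m > 0, ∃ δ > 0, ∀ x, ∀ w ∈ Ioo (1 - δ) 1, ∀ q ∈ Icc q₁ q₂, f x w + m ≤ f x (w - q) := by
  have hmem : 1 - q₁ ∈ Ioo (1 - θ) 1 := ⟨by linarith, by linarith⟩
  obtain ⟨m, hm, hfm⟩ := hf.exists_pos_le (1 - q₁) hmem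
  have hL : (0 : ℝ) < L + 1 := by positivity
  refine ⟨m / 2, by positivity, min (θ - q₂) (m / 2 / (L + 1)),
    lt_min (sub_pos.2 hq₂) (by positivity), fun x w hw q hq => ?_⟩
  obtain ⟨hw_lo, hw_hi⟩ := hw
  have hδθ : 1 - w < θ - q₂ := by linarith [min_le_left (θ - q₂) (m / 2 / (L + 1))]
  have hδm : (1 - w) * (L + 1) ≤ m / 2 := by
    rw [← le_div_iff₀ hL]
    linarith [min_le_right (θ - q₂) (m / 2 / (L + 1))]
  have hw_mem : w ∈ Icc (0 : ℝ) 1 := ⟨by linarith [hf.θ_mem.2], hw_hi.le⟩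
  have hanti : f x (1 - q₁) ≤ f x (w - q) :=
    hf.antitone_high x ⟨by linarith [hq.2], by linarith [hq.1]⟩ hmem (by linarith [hq.1])
  linarith [hf.apply_le_mul_one_sub hw_mem x, hfm x]

end Reaction

/-- A front in direction `e` with speed `c`, written as the family of its profiles: `W s` is the
profile whose interface sits at the hyperplane `x · e = s`, so that `(t, x) ↦ W (c * t) x` solves
the equation. Indexing by the position `s` instead of time lets fronts be shifted arbitrarily. The
front is steep: on intermediate values the profile increases in `s` at a rate bounded below. -/
structure IsSteepFront {d : ℕ} (f : Euc d → ℝ → ℝ) (e : Euc d) (c : ℝ) (W : ℝ → Euc d → ℝ) :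
    Prop where
  continuous : Continuous fun p : ℝ × Euc d => W p.1 p.2
  contDiff : ∀ s, ContDiff ℝ 2 (W s)
  mem_Ioo : ∀ s x, W s x ∈ Ioo (0 : ℝ) 1
  equation : ∀ s x, lap (W s) x + f x (W s x) = c * deriv (fun r => W r x) s
  steep : ∀ a b, 0 < a → b < 1 →
    ∃ κ > 0, ∀ s x, W s x ∈ Icc a b → κ ≤ deriv (fun r => W r x) s
  ahead : ∀ ε > 0, ∃ R, ∀ s x, s + R ≤ ⟪x, e⟫ → W s x < ε
  behind : ∀ ε > 0, ∃ R, ∀ s x, ⟪x, e⟫ + R ≤ s → 1 - ε < W s x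

namespace IsSteepFront

variable {d : ℕ} {f : Euc d → ℝ → ℝ} {L : ℝ≥0} {θ θ' : ℝ} {e : Euc d} {c : ℝ}
  {W : ℝ → Euc d → ℝ}

lemma deriv_pos (hW : IsSteepFront f e c W) (s : ℝ) (x : Euc d) :
    0 < deriv (fun r => W r x) s := by
  obtain ⟨κ, hκ, hsteep⟩ := hW.steep (W s x) (W s x) (hW.mem_Ioo s x).1 (hW.mem_Ioo s x).2
  exact hκ.trans_le (hsteep s x ⟨le_rfl, le_rfl⟩)

lemma hasDerivAt (hW : IsSteepFront f e c W) (s : ℝ) (x : Euc d) :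
    HasDerivAt (fun r => W r x) (deriv (fun r => W r x) s) s :=
  (differentiableAt_of_deriv_ne_zero (hW.deriv_pos s x).ne').hasDerivAt

lemma monotone (hW : IsSteepFront f e c W) (x : Euc d) : Monotone fun s => W s x :=
  (strictMono_of_deriv_pos fun s => hW.deriv_pos s x).monotone

lemma isClassical_shift (hW : IsSteepFront f e c W) {σ σ' q q' : ℝ → ℝ}
    (hσ : ∀ t, HasDerivAt σ (σ' t) t) (hq : ∀ t, HasDerivAt q (q' t) t) :
    IsClassical (fun t x => W (σ t) x + q t)
      (fun t x => deriv (fun r => W r x) (σ t) * σ' t + q' t) where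
  continuousOn := by
    have hσ_cont : Continuous σ := continuous_iff_continuousAt.2 fun t => (hσ t).continuousAt
    have hq_cont : Continuous q := continuous_iff_continuousAt.2 fun t => (hq t).continuousAt
    exact ((hW.continuous.comp ((hσ_cont.comp continuous_fst).prodMk continuous_snd)).add
      (hq_cont.comp continuous_fst)).continuousOn
  contDiff t _ := (hW.contDiff (σ t)).add contDiff_const
  hasDerivAt t x _ := ((hW.hasDerivAt (σ t) x).comp t (hσ t)).add (hq t)

lemma lap_shift (hW : IsSteepFront f e c W) (s q : ℝ) (x : Euc d) :
    lap (fun y => W s y + q) x = c * deriv (fun r => W r x) s - f x (W s x) := by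
  rw [lap_add_const, ← hW.equation]
  ring

lemma exists_reaction_add_le (hW : IsSteepFront f e c W) (hf : IsBistableType f L θ θ') {A : ℝ}
    (hA : 0 < A) :
    ∃ q₀ > 0, ∀ q ∈ Ioc 0 q₀, ∀ s x, W s x + q < 1 →
      f x (W s x + q) - f x (W s x) ≤ A * deriv (fun r => W r x) s := by
  obtain ⟨κ, hκ, hsteep⟩ :=
    hW.steep (θ' / 2) (1 - θ) (half_pos hf.θ'_pos) (by linarith [hf.θ_mem.1])
  have hL : (0 : ℝ) < L + 1 := by positivity
  refine ⟨min (θ' / 2) (A * κ / (L + 1)), lt_min (half_pos hf.θ'_pos) (by positivity),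
    fun q ⟨hq0, hq⟩ s x hlt => ?_⟩
  have hqθ : q ≤ θ' / 2 := hq.trans (min_le_left _ _)
  have hqκ : q * (L + 1) ≤ A * κ := (le_div_iff₀ hL).1 (hq.trans (min_le_right _ _))
  refine hf.apply_sub_apply_le (hW.mem_Ioo s x).1.le (by linarith) hlt
    (mul_pos hA (hW.deriv_pos s x)).le (fun hlow hhigh => ?_) x
  have hD : κ ≤ deriv (fun r => W r x) s := hsteep s x ⟨by linarith, hhigh⟩
  linarith [mul_le_mul_of_nonneg_left hD hA.le]

lemma initiallyLE_shift_add (hW : IsSteepFront f e c W) {g : Euc d → ℝ} {u : ℝ → Euc d → ℝ}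
    {q R : ℝ} {σ : ℝ → ℝ} (hu : IsSolR f g u)
    (hg : ∀ x, 0 < ⟪x, e⟫ → ContinuousAt g x ∧ g x ≤ q)
    (hR : ∀ s x, ⟪x, e⟫ + R ≤ s → 1 - q < W s x) (hσ : ContinuousAt σ 0) (hσR : R < σ 0) :
    InitiallyLE u fun t x => W (σ t) x + q := by
  intro x₀ η hη
  rcases lt_or_ge 0 ⟪x₀, e⟫ with hx₀ | hx₀
  · obtain ⟨hcont, hgq⟩ := hg x₀ hx₀
    filter_upwards [(hu.initLim x₀ hcont).eventually_lt_const
      (show g x₀ < q + η by linarith)] with p hp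
    linarith [(hW.mem_Ioo (σ p.1) p.2).1]
  · have hσ_lim : Tendsto (fun p : ℝ × Euc d => σ p.1) (𝓝[>] 0 ×ˢ 𝓝 x₀) (𝓝 (σ 0)) :=
      (hσ.mono_left nhdsWithin_le_nhds).comp tendsto_fst
    have hx_lim : Tendsto (fun p : ℝ × Euc d => ⟪p.2, e⟫ + R) (𝓝[>] 0 ×ˢ 𝓝 x₀)
        (𝓝 (⟪x₀, e⟫ + R)) :=
      (tendsto_snd.inner tendsto_const_nhds).add_const R
    have hpos : ∀ᶠ t in 𝓝[>] (0 : ℝ), 0 < t := self_mem_nhdsWithin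
    filter_upwards [hx_lim.eventually_lt hσ_lim (by linarith), hpos.prod_inl _] with p hp ht
    linarith [hR (σ p.1) p.2 hp.le, (hu.mem_Icc p.1 p.2 ht.le).2]

theorem exists_solution_le_shift_add (hW : IsSteepFront f e c W)
    (hf : IsBistableType f L θ θ') {A : ℝ} (hA : 0 < A) :
    ∃ q₀ > 0, ∀ q ∈ Ioc 0 q₀, ∀ g u, IsSolR f g u →
      (∀ x, 0 < ⟪x, e⟫ → ContinuousAt g x ∧ g x ≤ q) →
      ∃ s₀, ∀ t x, 0 < t → u t x ≤ W (s₀ + (c + A) * t) x + q := by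
  obtain ⟨q₀, hq₀, hreact⟩ := hW.exists_reaction_add_le hf hA
  refine ⟨q₀, hq₀, fun q hq g u hu hg => ?_⟩
  obtain ⟨R, hR⟩ := hW.behind q hq.1
  have hσ (t : ℝ) : HasDerivAt (fun t => R + 1 + (c + A) * t) (c + A) t := by
    simpa using ((hasDerivAt_id t).const_mul (c + A)).const_add (R + 1)
  refine ⟨R + 1, fun t x ht => comparison_principle hf.lipschitz hu.isClassical
    (hW.isClassical_shift hσ fun t => hasDerivAt_const t q) (fun t x ht => (hu.mem_Icc t x ht.le).2)
    (fun t x _ => (add_pos (hW.mem_Ioo _ x).1 hq.1).le) (fun _ _ _ _ => le_rfl) ?_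
    (hW.initiallyLE_shift_add hu hg hR (hσ 0).continuousAt (by simp)) ht x⟩
  intro t x ht hlt
  rw [hW.lap_shift]
  linarith [hreact q hq _ x (hlt.trans_le (hu.mem_Icc t x ht.le).2)]

lemma initiallyLE_shift_sub (hW : IsSteepFront f e c W) {g : Euc d → ℝ} {u : ℝ → Euc d → ℝ}
    {q R : ℝ} {σ Q : ℝ → ℝ} (hu : IsSolR f g u) (hQ : ContinuousAt Q 0) (hσ : ContinuousAt σ 0)
    (hg : ∀ x, ⟪x, e⟫ < 0 → ContinuousAt g x ∧ 1 - Q 0 < g x)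
    (hR : ∀ s x, s + R ≤ ⟪x, e⟫ → W s x < q) (hqQ : ∀ t, 0 < t → q ≤ Q t) (hσR : σ 0 + R < 0) :
    InitiallyLE (fun t x => W (σ t) x + -Q t) u := by
  intro x₀ η hη
  have hlim {h : ℝ → ℝ} (hh : ContinuousAt h 0) :
      Tendsto (fun p : ℝ × Euc d => h p.1) (𝓝[>] 0 ×ˢ 𝓝 x₀) (𝓝 (h 0)) :=
    (hh.mono_left nhdsWithin_le_nhds).comp tendsto_fst
  rcases lt_or_ge ⟪x₀, e⟫ 0 with hx₀ | hx₀
  · obtain ⟨hcont, hgQ⟩ := hg x₀ hx₀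
    filter_upwards [((hlim hQ).const_sub 1).eventually_lt (hu.initLim x₀ hcont) hgQ] with p hp
    linarith [(hW.mem_Ioo (σ p.1) p.2).2]
  · have hx_lim : Tendsto (fun p : ℝ × Euc d => ⟪p.2, e⟫) (𝓝[>] 0 ×ˢ 𝓝 x₀) (𝓝 ⟪x₀, e⟫) :=
      tendsto_snd.inner tendsto_const_nhds
    have hpos : ∀ᶠ t in 𝓝[>] (0 : ℝ), 0 < t := self_mem_nhdsWithin
    filter_upwards [((hlim hσ).add_const R).eventually_lt hx_lim (by linarith),
      hpos.prod_inl _] with p hp ht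
    linarith [hR (σ p.1) p.2 hp.le, hqQ p.1 ht, (hu.mem_Icc p.1 p.2 ht.le).1]

lemma exists_reaction_sub_le (hW : IsSteepFront f e c W) (hf : IsBistableType f L θ θ') {A : ℝ}
    (hA : 0 < A) :
    ∃ q₀ > 0, ∃ B ≥ 0, ∀ q ∈ Ioc 0 q₀, ∀ r ∈ Icc 0 (3 * θ / 4 - q), ∀ s x, q + r < W s x →
      f x (W s x) - f x (W s x - (q + r)) ≤ (A + B * r) * deriv (fun r => W r x) s := by
  obtain ⟨κ, hκ, hsteep⟩ := hW.steep θ' (1 - θ / 4) hf.θ'_pos (by linarith [hf.θ_mem.1])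
  have hL : (0 : ℝ) < L + 1 := by positivity
  refine ⟨A * κ / (L + 1), by positivity, L / κ, by positivity, fun q hq r hr s x hlt => ?_⟩
  have hqκ : q * (L + 1) ≤ A * κ := (le_div_iff₀ hL).1 hq.2
  have hrate : 0 ≤ A + L / κ * r := add_nonneg hA.le (mul_nonneg (by positivity) hr.1)
  refine hf.apply_sub_apply_le (by linarith) (by linarith [hq.1, hr.1]) (hW.mem_Ioo s x).2
    (mul_nonneg hrate (hW.deriv_pos s x).le) (fun hlow hhigh => ?_) x
  have hD : κ ≤ deriv (fun r => W r x) s := hsteep s x ⟨hlow.le, by linarith [hr.2]⟩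
  calc L * (W s x - (W s x - (q + r))) = L * q + L * r := by ring
    _ ≤ A * κ + L * r := by linarith [hq.1]
    _ = (A + L / κ * r) * κ := by field_simp
    _ ≤ (A + L / κ * r) * deriv (fun r => W r x) s := mul_le_mul_of_nonneg_left hD hrate

lemma exists_reaction_sub_add_decay_le (hW : IsSteepFront f e c W)
    (hf : IsBistableType f L θ θ') {A : ℝ} (hA : 0 < A) :
    ∃ q₀ > 0, ∀ q ∈ Ioc 0 q₀, q ≤ 3 * θ / 4 → ∃ ρ > 0, ∃ B ≥ 0,
      ∀ r ∈ Icc 0 (3 * θ / 4 - q), ∀ s x, q + r < W s x →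
      f x (W s x) - f x (W s x - (q + r)) + ρ * r
        ≤ (A + B * r) * deriv (fun r => W r x) s := by
  obtain ⟨hθ0, hθ1⟩ := hf.θ_mem
  obtain ⟨q₀, hq₀, B, hB, hreact⟩ := hW.exists_reaction_sub_le hf hA
  refine ⟨q₀, hq₀, fun q hq hqθ => ?_⟩
  obtain ⟨ρ, hρ, δ, hδ, hgain⟩ := hf.exists_gain_near_one hq.1 hqθ (by linarith)
  obtain ⟨κ, hκ, hsteep⟩ := hW.steep q (1 - δ) hq.1 (by linarith)
  refine ⟨ρ, hρ, B + ρ / κ, by positivity, fun r hr s x hlt => ?_⟩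
  have hD := hW.deriv_pos s x
  rcases lt_or_ge (1 - δ) (W s x) with hnear | haway
  · have hrate : 0 ≤ A + (B + ρ / κ) * r :=
      add_nonneg hA.le (mul_nonneg (by positivity) hr.1)
    have hdecay : ρ * r ≤ ρ := mul_le_of_le_one_right hρ.le (by linarith [hr.2, hq.1])
    linarith [hgain x (W s x) ⟨hnear, (hW.mem_Ioo s x).2⟩ (q + r)
      ⟨by linarith [hr.1], by linarith [hr.2]⟩, mul_nonneg hrate hD.le]
  · have hdecay : ρ * r ≤ ρ / κ * r * deriv (fun r => W r x) s :=
      calc ρ * r = ρ / κ * r * κ := by field_simp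
        _ ≤ ρ / κ * r * deriv (fun r => W r x) s :=
          mul_le_mul_of_nonneg_left (hsteep s x ⟨by linarith [hr.1], haway⟩)
            (mul_nonneg (by positivity) hr.1)
    linarith [hreact q hq r hr s x hlt]

lemma shift_sub_le_solution (hW : IsSteepFront f e c W)
    (hf : ∀ x, LipschitzOnWith L (f x) (Icc 0 1)) {A B ρ q R : ℝ} {r σ : ℝ → ℝ} (hq : 0 < q)
    (hr_nonneg : ∀ t, 0 ≤ r t) (hr : ∀ t, HasDerivAt r (-ρ * r t) t)
    (hσ : ∀ t, HasDerivAt σ (c - A - B * r t) t)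
    (hreact : ∀ t x, 0 < t → q + r t < W (σ t) x →
      f x (W (σ t) x) - f x (W (σ t) x - (q + r t)) + ρ * r t
        ≤ (A + B * r t) * deriv (fun s => W s x) (σ t))
    (hR : ∀ s x, s + R ≤ ⟪x, e⟫ → W s x < q) (hσR : σ 0 + R < 0)
    {g : Euc d → ℝ} {u : ℝ → Euc d → ℝ} (hu : IsSolR f g u)
    (hg : ∀ x, ⟪x, e⟫ < 0 → ContinuousAt g x ∧ 1 - (q + r 0) < g x)
    {t : ℝ} (ht : 0 < t) (x : Euc d) : W (σ t) x + -(q + r t) ≤ u t x := by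
  have hQ (t : ℝ) : HasDerivAt (fun t => -(q + r t)) (ρ * r t) t := by
    simpa only [neg_mul, neg_neg] using ((hr t).const_add q).fun_neg
  refine comparison_principle hf (hW.isClassical_shift hσ hQ) hu.isClassical
    (fun t x _ => ?_) (fun t x ht => (hu.mem_Icc t x ht.le).1) (fun t x ht hlt => ?_)
    (fun _ _ _ _ => le_rfl)
    (hW.initiallyLE_shift_sub hu ((hr 0).continuousAt.const_add q) (hσ 0).continuousAt hg hR
      (fun t _ => ?_) hσR) ht x
  · linarith [(hW.mem_Ioo (σ t) x).2, hr_nonneg t]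
  · rw [hW.lap_shift, ← sub_eq_add_neg]
    linarith [hreact t x ht (by linarith [(hu.mem_Icc t x ht.le).1])]
  · linarith [hr_nonneg t]

theorem exists_shift_le_solution_add (hW : IsSteepFront f e c W)
    (hf : IsBistableType f L θ θ') {A ε : ℝ} (hA : 0 < A) (hε : 0 < ε) {g : Euc d → ℝ}
    {u : ℝ → Euc d → ℝ} (hu : IsSolR f g u)
    (hg : ∀ x, ⟪x, e⟫ < 0 → ContinuousAt g x ∧ 1 - 3 * θ / 4 < g x) :
    ∃ ρ > 0, ∃ s₀, ∀ t x, 0 < t → W (s₀ + (c - A) * t) x ≤ u t x + ε + Real.exp (-ρ * t) := by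
  obtain ⟨hθ0, hθ1⟩ := hf.θ_mem
  obtain ⟨q₀, hq₀, hreact⟩ := hW.exists_reaction_sub_add_decay_le hf hA
  obtain ⟨q, hq0, hqq₀, hqε, hqθ⟩ : ∃ q > 0, q ≤ q₀ ∧ q ≤ ε ∧ q ≤ 3 * θ / 4 :=
    ⟨min q₀ (min ε (3 * θ / 4)), lt_min hq₀ (lt_min hε (by linarith)), by simp⟩
  obtain ⟨ρ, hρ, B, hB, hreact⟩ := hreact q ⟨hq0, hqq₀⟩ hqθ
  obtain ⟨R, hR⟩ := hW.ahead q hq0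
  obtain ⟨r₀, hr₀⟩ : ∃ r₀, r₀ = 3 * θ / 4 - q := ⟨_, rfl⟩
  have hr₀_nonneg : 0 ≤ r₀ := hr₀ ▸ sub_nonneg.2 hqθ
  obtain ⟨σ, hσ_zero, hσ, hσ_ge⟩ := exists_decaying_shift (c - A) (-(R + 1)) hρ hB hr₀_nonneg
  have hr_nonneg (t : ℝ) : 0 ≤ r₀ * Real.exp (-ρ * t) := mul_nonneg hr₀_nonneg (Real.exp_pos _).le
  have hr_le (t : ℝ) (ht : 0 < t) : r₀ * Real.exp (-ρ * t) ≤ 3 * θ / 4 - q :=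
    hr₀ ▸ mul_le_of_le_one_right hr₀_nonneg (Real.exp_le_one_iff.2 (by nlinarith))
  refine ⟨ρ, hρ, -(R + 1) - B / ρ * r₀, fun t x ht => ?_⟩
  have hle := hW.shift_sub_le_solution hf.lipschitz hq0 hr_nonneg
    (hasDerivAt_const_mul_exp r₀ (-ρ)) hσ
    (fun t x ht => hreact _ ⟨hr_nonneg t, hr_le t ht⟩ (σ t) x) hR (by simp [hσ_zero]) hu
    (by simpa [hr₀, sub_eq_add_neg] using hg) ht x
  have hr_exp : r₀ * Real.exp (-ρ * t) ≤ Real.exp (-ρ * t) :=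
    mul_le_of_le_one_left (Real.exp_pos _).le (by linarith)
  linarith [hW.monotone x (hσ_ge t)]

end IsSteepFront

section Periodicity

lemma periodic_of_mem_span_int {ι E β : Type*} [AddCommGroup E] {b : ι → E} {F : E → β}
    (hF : ∀ i, Function.Periodic F (b i)) {v : E} (hv : v ∈ Submodule.span ℤ (range b)) :
    Function.Periodic F v := by
  induction hv using Submodule.span_induction with
  | mem v hv =>
    obtain ⟨i, rfl⟩ := hv
    exact hF i
  | zero => exact fun x => congrArg F (add_zero x)
  | add v w _ _ hv hw => exact hv.add_period hw
  | smul n v _ hv => exact hv.zsmul n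

variable {ι E : Type*} [NormedAddCommGroup E] [NormedSpace ℝ E]

lemma apply_fract_of_periodic [Fintype ι] (b : Module.Basis ι ℝ E) {β : Type*} {F : E → β}
    (hF : ∀ i, Function.Periodic F (b i)) (x : E) : F (ZSpan.fract b x) = F x :=
  (periodic_of_mem_span_int hF (ZSpan.floor b x).2).sub_eq x

lemma exists_pos_le_of_periodic [FiniteDimensional ℝ E] (b : Module.Basis ι ℝ E)
    {X : Type*} [TopologicalSpace X] {S : Set X} (hS : IsCompact S) {F : X → E → ℝ}
    (hcont : Continuous fun p : X × E => F p.1 p.2) (hper : ∀ s i, Function.Periodic (F s) (b i))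
    (hpos : ∀ s ∈ S, ∀ x, 0 < F s x) : ∃ m > 0, ∀ s ∈ S, ∀ x, m ≤ F s x := by
  have := Module.Finite.finite_basis b
  have := Fintype.ofFinite ι
  have hcell : IsCompact (closure (ZSpan.fundamentalDomain b)) :=
    (ZSpan.fundamentalDomain_isBounded b).isCompact_closure
  obtain ⟨m, hm, hmF⟩ := (hS.prod hcell).exists_forall_le' hcont.continuousOn
    fun p hp => hpos p.1 hp.1 p.2
  refine ⟨m, hm, fun s hs x => ?_⟩
  rw [← apply_fract_of_periodic b (hper s) x]
  exact hmF (s, ZSpan.fract b x) ⟨hs, subset_closure (ZSpan.fract_mem_fundamentalDomain b x)⟩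

end Periodicity

lemma isBistableType_of_periodic_ignition {d : ℕ} {ι : Type*} (b : Module.Basis ι ℝ (Euc d))
    {f : Euc d → ℝ → ℝ} {L : ℝ≥0} {θ θ' : ℝ}
    (hlip : ∀ x x' : Euc d, ∀ u u' : ℝ, u ∈ Icc (0 : ℝ) 1 → u' ∈ Icc (0 : ℝ) 1 →
      |f x u - f x' u'| ≤ L * (‖x - x'‖ + |u - u'|))
    (hper : ∀ u i, Function.Periodic (fun x => f x u) (b i)) (hf1 : ∀ x, f x 1 = 0)
    (hθ : θ ∈ Ioo (0 : ℝ) 1) (hθ' : 0 < θ') (hign : ∀ x, ∀ u ∈ Icc (0 : ℝ) θ', f x u = 0)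
    (hpos : ∀ x, ∀ u ∈ Ioo (1 - θ) 1, 0 < f x u)
    (hmono : ∀ x, AntitoneOn (fun u => f x u) (Ioo (1 - θ) 1)) :
    IsBistableType f L θ θ' where
  θ_mem := hθ
  θ'_pos := hθ'
  lipschitz x := LipschitzOnWith.of_dist_le_mul fun u hu v hv => by
    simpa [Real.dist_eq] using hlip x x u v hu hv
  map_one := hf1
  antitone_low x u hu v hv _ := by rw [hign x u hu, hign x v hv]
  antitone_high := hmono
  exists_pos_le v hv := by
    have hv_mem : v ∈ Icc (0 : ℝ) 1 := ⟨by linarith [hv.1, hθ.2], hv.2.le⟩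
    have hcont : Continuous fun x => f x v :=
      (LipschitzWith.of_dist_le_mul (K := L) fun x y => by
        simpa [Real.dist_eq, dist_eq_norm] using hlip x y v v hv_mem hv_mem).continuous
    obtain ⟨m, hm, hmf⟩ := exists_pos_le_of_periodic b (isCompact_univ (X := Unit))
      (F := fun _ x => f x v) (hcont.comp continuous_snd) (fun _ => hper v)
      fun _ _ x => hpos x v hv
    exact ⟨m, hm, hmf () trivial⟩

/-- The period lattice basis `l₁e₁, …, l_de_d` of `ℝ^d`. -/
def periodBasis {d : ℕ} (l : Fin d → ℝ) (hl : ∀ i, 0 < l i) :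
    Module.Basis (Fin d) ℝ (Euc d) :=
  (EuclideanSpace.basisFun (Fin d) ℝ).toBasis.isUnitSMul fun i => (hl i).ne'.isUnit

lemma periodic_periodBasis {d : ℕ} {l : Fin d → ℝ} (hl : ∀ i, 0 < l i) {β : Type*}
    {F : Euc d → β} (hF : ∀ i x, F (x + l i • EuclideanSpace.single i 1) = F x) (i : Fin d) :
    Function.Periodic F (periodBasis l hl i) := fun x => by
  simpa [periodBasis, Module.Basis.isUnitSMul_apply] using hF i x

/-- A pulsating front `U(x · e - ct, x)` in direction `e` with speed `c`, periodic with respect to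
the lattice spanned by `b`. -/
structure IsPulsatingFront {d : ℕ} {ι : Type*} (f : Euc d → ℝ → ℝ) (b : Module.Basis ι ℝ (Euc d))
    (e : Euc d) (c : ℝ) (U : ℝ → Euc d → ℝ) : Prop where
  contDiff : ContDiff ℝ 1 fun p : ℝ × Euc d => U p.1 p.2
  periodic : ∀ s i, Function.Periodic (U s) (b i)
  deriv_neg : ∀ s x, deriv (fun r => U r x) s < 0
  mem_Ioo : ∀ s x, U s x ∈ Ioo (0 : ℝ) 1
  tendsto_atBot : TendstoUniformly U (fun _ => 1) atBot
  tendsto_atTop : TendstoUniformly U (fun _ => 0) atTop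
  contDiff_space : ∀ t : ℝ, ContDiff ℝ 2 fun x : Euc d => U (⟪x, e⟫ - c * t) x
  equation : ∀ (t : ℝ) (x : Euc d), HasDerivAt (fun s : ℝ => U (⟪x, e⟫ - c * s) x)
    (lap (fun z : Euc d => U (⟪z, e⟫ - c * t) z) x + f x (U (⟪x, e⟫ - c * t) x)) t

namespace IsPulsatingFront

variable {d : ℕ} {ι : Type*} {f : Euc d → ℝ → ℝ} {b : Module.Basis ι ℝ (Euc d)} {e : Euc d}
  {c : ℝ} {U : ℝ → Euc d → ℝ}

lemma continuous_deriv (hU : IsPulsatingFront f b e c U) :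
    Continuous fun p : ℝ × Euc d => deriv (fun r => U r p.2) p.1 := by
  have hderiv (p : ℝ × Euc d) : deriv (fun r => U r p.2) p.1
      = fderiv ℝ (fun p : ℝ × Euc d => U p.1 p.2) p (1, 0) :=
    ((hU.contDiff.differentiable one_ne_zero p).hasFDerivAt.comp_hasDerivAt
      (f := fun r => (r, p.2)) p.1 ((hasDerivAt_id p.1).prodMk (hasDerivAt_const p.1 p.2))).deriv
  simp only [hderiv]
  exact (hU.contDiff.continuous_fderiv one_ne_zero).clm_apply continuous_const

lemma exists_forall_lt (hU : IsPulsatingFront f b e c U) {ε : ℝ} (hε : 0 < ε) :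
    ∃ R, ∀ s x, R ≤ s → U s x < ε := by
  obtain ⟨R, hR⟩ := eventually_atTop.1 (tendstoUniformly_iff.1 hU.tendsto_atTop ε hε)
  refine ⟨R, fun s x hs => ?_⟩
  simpa [Real.dist_eq, abs_of_pos (hU.mem_Ioo s x).1] using hR s hs x

lemma exists_forall_one_sub_lt (hU : IsPulsatingFront f b e c U) {ε : ℝ} (hε : 0 < ε) :
    ∃ R, ∀ s x, s ≤ R → 1 - ε < U s x := by
  obtain ⟨R, hR⟩ := eventually_atBot.1 (tendstoUniformly_iff.1 hU.tendsto_atBot ε hε)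
  refine ⟨R, fun s x hs => ?_⟩
  linarith [(abs_lt.1 (hR s hs x)).2]

lemma exists_steepness (hU : IsPulsatingFront f b e c U) {a₀ a₁ : ℝ} (ha₀ : 0 < a₀)
    (ha₁ : a₁ < 1) :
    ∃ κ > 0, ∀ s x, U s x ∈ Icc a₀ a₁ → κ ≤ -deriv (fun r => U r x) s := by
  obtain ⟨R₀, hR₀⟩ := hU.exists_forall_lt ha₀
  obtain ⟨R₁, hR₁⟩ := hU.exists_forall_one_sub_lt (sub_pos.2 ha₁)
  obtain ⟨κ, hκ, hle⟩ := exists_pos_le_of_periodic b (isCompact_Icc (a := R₁) (b := R₀))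
    hU.continuous_deriv.neg (fun s i x => by simp only [hU.periodic _ i x])
    fun s _ x => neg_pos.2 (hU.deriv_neg s x)
  refine ⟨κ, hκ, fun s x hs => hle s ⟨?_, ?_⟩ x⟩
  · by_contra! hlt
    linarith [hR₁ s x hlt.le, hs.2]
  · by_contra! hlt
    linarith [hR₀ s x hlt.le, hs.1]

lemma profile_equation (hU : IsPulsatingFront f b e c U) (hc : c ≠ 0) (s : ℝ) (x : Euc d) :
    lap (fun z => U (⟪z, e⟫ - s) z) x + f x (U (⟪x, e⟫ - s) x)
      = c * deriv (fun r => U (⟪x, e⟫ - r) x) s := by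
  have hprofile : HasDerivAt (fun r => U (⟪x, e⟫ - r) x)
      (deriv (fun r => U (⟪x, e⟫ - r) x) s) (c * (s / c)) := by
    rw [mul_div_cancel₀ s hc]
    refine (differentiableAt_of_deriv_ne_zero ?_).hasDerivAt
    rw [deriv_comp_const_sub (f := fun r => U r x)]
    exact (neg_pos.2 (hU.deriv_neg _ x)).ne'
  have hchain := hprofile.comp (s / c) ((hasDerivAt_id (s / c)).const_mul c)
  have hunique := (hU.equation (s / c) x).unique hchain
  rw [mul_div_cancel₀ s hc] at hunique
  linarith

theorem isSteepFront (hU : IsPulsatingFront f b e c U) (hc : c ≠ 0) :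
    IsSteepFront f e c fun s x => U (⟪x, e⟫ - s) x where
  continuous := hU.contDiff.continuous.comp
    (((continuous_snd.inner continuous_const).sub continuous_fst).prodMk continuous_snd)
  contDiff s := by simpa only [mul_div_cancel₀ s hc] using hU.contDiff_space (s / c)
  mem_Ioo s x := hU.mem_Ioo _ x
  equation := hU.profile_equation hc
  steep a₀ a₁ ha₀ ha₁ := by
    obtain ⟨κ, hκ, hsteep⟩ := hU.exists_steepness ha₀ ha₁
    refine ⟨κ, hκ, fun s x hs => ?_⟩
    rw [deriv_comp_const_sub (f := fun r => U r x)]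
    exact hsteep _ x hs
  ahead ε hε := by
    obtain ⟨R, hR⟩ := hU.exists_forall_lt hε
    exact ⟨R, fun s x hs => hR _ x (by linarith)⟩
  behind ε hε := by
    obtain ⟨R, hR⟩ := hU.exists_forall_one_sub_lt hε
    exact ⟨-R, fun s x hs => hR _ x (by linarith)⟩

end IsPulsatingFront

/-- `c` is an exclusive front speed in direction `e` for `u_t = Δu + f(x,u)`: half-space data
spread in direction `e` with speed `c`, and raising the data to a small `α` ahead of the interface
does not make them spread faster. Limits of infima and suprema over `(ce ± K)t` are spelled out
with `ε` and `T`. -/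
def IsExclusiveFrontSpeed {d : ℕ} (f : Euc d → ℝ → ℝ) (θ : ℝ) (e : Euc d) (c : ℝ) : Prop :=
  (∀ u : ℝ → Euc d → ℝ,
    IsSolR f ({x : Euc d | ⟪x, e⟫ < 0}.indicator fun _ => 1 - θ / 2) u →
    ∀ K : Set (Euc d), IsCompact K → K ⊆ {x : Euc d | 0 < ⟪x, e⟫} →
      (∀ ε : ℝ, 0 < ε → ∃ T : ℝ, ∀ t ≥ T, ∀ k ∈ K, 1 - ε ≤ u t (t • (c • e - k))) ∧
      (∀ ε : ℝ, 0 < ε → ∃ T : ℝ, ∀ t ≥ T, ∀ k ∈ K, u t (t • (c • e + k)) ≤ ε)) ∧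
  (∀ K : Set (Euc d), IsCompact K → K ⊆ {x : Euc d | 0 < ⟪x, e⟫} →
    ∃ αK : ℝ, 0 < αK ∧ ∀ α ∈ Ioc (0 : ℝ) αK, ∀ u : ℝ → Euc d → ℝ,
      IsSolR f (fun x => if ⟪x, e⟫ < 0 then 1 else α) u →
      ∀ ε : ℝ, 0 < ε → ∃ T : ℝ, ∀ t ≥ T, ∀ k ∈ K, u t (t • (c • e + k)) ≤ α + ε)

section Spreading

variable {d : ℕ} {f : Euc d → ℝ → ℝ} {L : ℝ≥0} {θ θ' : ℝ} {e : Euc d} {c : ℝ}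
  {W : ℝ → Euc d → ℝ}

lemma exists_pos_le_inner {K : Set (Euc d)} (hK : IsCompact K) (hKe : K ⊆ {x | 0 < ⟪x, e⟫}) :
    ∃ μ > 0, ∀ k ∈ K, μ ≤ ⟪k, e⟫ :=
  hK.exists_forall_le' (by fun_prop) hKe

lemma inner_smul_add_of_norm_eq_one (he : ‖e‖ = 1) (t c : ℝ) (k : Euc d) :
    ⟪t • (c • e + k), e⟫ = t * (c + ⟪k, e⟫) := by
  simp [inner_smul_left, inner_add_left, he, mul_add]

lemma continuousAt_of_eqOn_const {g : Euc d → ℝ} {s : Set (Euc d)} {a : ℝ} (hs : IsOpen s)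
    (hg : EqOn g (fun _ => a) s) {x : Euc d} (hx : x ∈ s) : ContinuousAt g x :=
  (continuousOn_const.congr hg).continuousAt (hs.mem_nhds hx)

namespace IsSteepFront

theorem exists_eventually_solution_le (hW : IsSteepFront f e c W)
    (hf : IsBistableType f L θ θ') (he : ‖e‖ = 1) {μ : ℝ} (hμ : 0 < μ) :
    ∃ q₀ > 0, ∀ q ∈ Ioc 0 q₀, ∀ g u, IsSolR f g u →
      (∀ x, 0 < ⟪x, e⟫ → ContinuousAt g x ∧ g x ≤ q) → ∀ ε > 0,
      ∀ᶠ t in atTop, ∀ k, μ ≤ ⟪k, e⟫ → u t (t • (c • e + k)) ≤ q + ε := by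
  obtain ⟨q₀, hq₀, hupper⟩ := hW.exists_solution_le_shift_add hf (half_pos hμ)
  refine ⟨q₀, hq₀, fun q hq g u hu hg ε hε => ?_⟩
  obtain ⟨s₀, hle⟩ := hupper q hq g u hu hg
  obtain ⟨R, hR⟩ := hW.ahead ε hε
  filter_upwards [eventually_gt_atTop 0,
    (tendsto_id.atTop_mul_const (half_pos hμ)).eventually_ge_atTop (s₀ + R)] with t ht htR k hk
  have hfar : s₀ + (c + μ / 2) * t + R ≤ ⟪t • (c • e + k), e⟫ := by
    rw [inner_smul_add_of_norm_eq_one he]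
    linarith [mul_le_mul_of_nonneg_left hk ht.le, show t * (μ / 2) ≥ s₀ + R from htR]
  linarith [hle t (t • (c • e + k)) ht, hR _ _ hfar]

theorem eventually_le_solution (hW : IsSteepFront f e c W) (hf : IsBistableType f L θ θ')
    (he : ‖e‖ = 1) {μ ε : ℝ} (hμ : 0 < μ) (hε : 0 < ε) {g : Euc d → ℝ} {u : ℝ → Euc d → ℝ}
    (hu : IsSolR f g u) (hg : ∀ x, ⟪x, e⟫ < 0 → ContinuousAt g x ∧ 1 - 3 * θ / 4 < g x) :
    ∀ᶠ t in atTop, ∀ k, μ ≤ ⟪k, e⟫ → 1 - ε ≤ u t (t • (c • e - k)) := by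
  have hε3 : 0 < ε / 3 := by positivity
  obtain ⟨ρ, hρ, s₀, hle⟩ := hW.exists_shift_le_solution_add hf (half_pos hμ) hε3 hu hg
  obtain ⟨R, hR⟩ := hW.behind (ε / 3) hε3
  have hdecay : Tendsto (fun t => Real.exp (-ρ * t)) atTop (𝓝 0) :=
    Real.tendsto_exp_atBot.comp (tendsto_id.const_mul_atTop_of_neg (neg_lt_zero.2 hρ))
  filter_upwards [eventually_gt_atTop 0, hdecay.eventually_lt_const hε3,
    (tendsto_id.atTop_mul_const (half_pos hμ)).eventually_ge_atTop (R - s₀)] with t ht hexp htR k hk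
  have hfar : ⟪t • (c • e - k), e⟫ + R ≤ s₀ + (c - μ / 2) * t := by
    rw [sub_eq_add_neg, inner_smul_add_of_norm_eq_one he, inner_neg_left]
    linarith [mul_le_mul_of_nonneg_left hk ht.le, show t * (μ / 2) ≥ R - s₀ from htR]
  linarith [hle t (t • (c • e - k)) ht, hR _ _ hfar]

end IsSteepFront

theorem stmt7_general (hf : IsBistableType f L θ θ') (he : ‖e‖ = 1)
    (hW : IsSteepFront f e c W) : IsExclusiveFrontSpeed f θ e c := by
  have hopen_ahead : IsOpen {x : Euc d | 0 < ⟪x, e⟫} := isOpen_lt (by fun_prop) (by fun_prop)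
  have hopen_behind : IsOpen {x : Euc d | ⟪x, e⟫ < 0} := isOpen_lt (by fun_prop) (by fun_prop)
  refine ⟨fun u hu K hK hKe => ⟨fun ε hε => ?_, fun ε hε => ?_⟩, fun K hK hKe => ?_⟩ <;>
    obtain ⟨μ, hμ, hKμ⟩ := exists_pos_le_inner hK hKe
  · have hdata (x : Euc d) (hx : ⟪x, e⟫ < 0) := indicator_of_mem
      (s := {x : Euc d | ⟪x, e⟫ < 0}) hx fun _ => 1 - θ / 2
    obtain ⟨T, hT⟩ := eventually_atTop.1 (hW.eventually_le_solution hf he hμ hε hu fun x hx =>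
      ⟨continuousAt_of_eqOn_const hopen_behind hdata hx, by linarith [hdata x hx, hf.θ_mem.1]⟩)
    exact ⟨T, fun t ht k hk => hT t ht k (hKμ k hk)⟩
  · obtain ⟨q₀, hq₀, hupper⟩ := hW.exists_eventually_solution_le hf he hμ
    have hq : 0 < min q₀ (ε / 2) := lt_min hq₀ (half_pos hε)
    have hdata (x : Euc d) (hx : 0 < ⟪x, e⟫) := indicator_of_notMem
      (s := {x : Euc d | ⟪x, e⟫ < 0}) (not_lt.2 hx.le) fun _ => 1 - θ / 2
    obtain ⟨T, hT⟩ := eventually_atTop.1 (hupper _ ⟨hq, min_le_left _ _⟩ _ u hu (fun x hx =>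
      ⟨continuousAt_of_eqOn_const hopen_ahead hdata hx, (hdata x hx).trans_le hq.le⟩)
      (ε / 2) (half_pos hε))
    exact ⟨T, fun t ht k hk => by
      linarith [hT t ht k (hKμ k hk), min_le_right q₀ (ε / 2)]⟩
  · obtain ⟨q₀, hq₀, hupper⟩ := hW.exists_eventually_solution_le hf he hμ
    refine ⟨q₀, hq₀, fun α hα u hu ε hε => ?_⟩
    have hdata (x : Euc d) (hx : 0 < ⟪x, e⟫) : ite (⟪x, e⟫ < 0) 1 α = α := if_neg hx.le.not_gt
    obtain ⟨T, hT⟩ := eventually_atTop.1 (hupper α hα _ u hu (fun x hx =>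
      ⟨continuousAt_of_eqOn_const hopen_ahead hdata hx, (hdata x hx).le⟩) ε hε)
    exact ⟨T, fun t ht k hk => hT t ht k (hKμ k hk)⟩

end Spreading

/-- Theorem 1.6a: for periodic ignition reactions, the speed of a pulsating
front in direction `e` is an exclusive front speed in direction `e`. -/
theorem stmt7 {d : ℕ} (hd1 : 1 ≤ d) (l : Fin d → ℝ) (hl : ∀ i, 0 < l i)
    (f : Euc d → ℝ → ℝ)
    (hlip : ∃ L : ℝ, 0 ≤ L ∧ ∀ x x' : Euc d, ∀ u u' : ℝ, u ∈ Icc (0:ℝ) 1 → u' ∈ Icc (0:ℝ) 1 →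
      |f x u - f x' u'| ≤ L * (‖x - x'‖ + |u - u'|))
    (hnonneg : ∀ x, ∀ u ∈ Icc (0:ℝ) 1, 0 ≤ f x u)
    (hper : ∀ i : Fin d, ∀ (x : Euc d) (u : ℝ), f (x + l i • EuclideanSpace.single i 1) u = f x u)
    (hf0 : ∀ x, f x 0 = 0) (hf1 : ∀ x, f x 1 = 0)
    (θ θ' : ℝ) (hθ : θ ∈ Ioo (0:ℝ) (1/2)) (hθ' : 0 < θ')
    (hign : ∀ x : Euc d, ∀ u ∈ Icc (0:ℝ) θ', f x u = 0)
    (hpos : ∀ x : Euc d, ∀ u ∈ Ioo (1-θ) 1, 0 < f x u)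
    (hmono : ∀ x : Euc d, AntitoneOn (fun u => f x u) (Ioo (1-θ) 1))
    (e : Euc d) (he : e ∈ sphere (0:Euc d) 1) (c : ℝ) (hc : 0 < c)
    (U : ℝ → Euc d → ℝ)
    (hU1 : ContDiff ℝ 1 fun p : ℝ × Euc d => U p.1 p.2)
    (hUper : ∀ i : Fin d, ∀ (s : ℝ) (x : Euc d),
      U s (x + l i • EuclideanSpace.single i 1) = U s x)
    (hUdec : ∀ (s : ℝ) (x : Euc d), deriv (fun s' => U s' x) s < 0)
    (hUrange : ∀ (s : ℝ) (x : Euc d), U s x ∈ Ioo (0:ℝ) 1)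
    (hUbot : TendstoUniformly U (fun _ => (1:ℝ)) atBot)
    (hUtop : TendstoUniformly U (fun _ => (0:ℝ)) atTop)
    (hC2 : ∀ t : ℝ, ContDiff ℝ 2 fun x : Euc d => U (⟪x, e⟫ - c * t) x)
    (heqn : ∀ (t : ℝ) (x : Euc d),
      HasDerivAt (fun s : ℝ => U (⟪x, e⟫ - c * s) x)
        (lap (fun z : Euc d => U (⟪z, e⟫ - c * t) z) x + f x (U (⟪x, e⟫ - c * t) x)) t) :
    (∀ u : ℝ → Euc d → ℝ,
      IsSolR f ({x : Euc d | ⟪x, e⟫ < 0}.indicator fun _ => 1 - θ/2) u →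
      ∀ K : Set (Euc d), IsCompact K → K ⊆ {x : Euc d | 0 < ⟪x, e⟫} →
        (∀ ε : ℝ, 0 < ε → ∃ T : ℝ, ∀ t ≥ T, ∀ k ∈ K, 1 - ε ≤ u t (t • (c • e - k))) ∧
        (∀ ε : ℝ, 0 < ε → ∃ T : ℝ, ∀ t ≥ T, ∀ k ∈ K, u t (t • (c • e + k)) ≤ ε)) ∧
    (∀ K : Set (Euc d), IsCompact K → K ⊆ {x : Euc d | 0 < ⟪x, e⟫} →
      ∃ αK : ℝ, 0 < αK ∧ ∀ α ∈ Ioc (0:ℝ) αK, ∀ u : ℝ → Euc d → ℝ,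
        IsSolR f (fun x => if ⟪x, e⟫ < 0 then 1 else α) u →
        ∀ ε : ℝ, 0 < ε → ∃ T : ℝ, ∀ t ≥ T, ∀ k ∈ K, u t (t • (c • e + k)) ≤ α + ε) := by
  obtain ⟨L, hL, hlip⟩ := hlip
  lift L to ℝ≥0 using hL
  have hf : IsBistableType f L θ θ' :=
    isBistableType_of_periodic_ignition (periodBasis l hl) hlip
      (fun u => periodic_periodBasis hl fun i x => hper i x u) hf1
      ⟨hθ.1, by linarith [hθ.2]⟩ hθ' hign hpos hmono
  have hU : IsPulsatingFront f (periodBasis l hl) e c U :=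
    ⟨hU1, fun s => periodic_periodBasis hl fun i => hUper i s, hUdec, hUrange, hUbot, hUtop,
      hC2, heqn⟩
  exact stmt7_general hf (by simpa using he) (hU.isSteepFront hc.ne')
end
end

section
/- Let A ⊆ ℝ^d be open and convex and let t ≥ 0. Then A + tS = ⋂_{e∈S^{d−1}} {x ∈ ℝ^d : x·e < sup_{y∈A} y·e + c*(e)·t} and closure(A + tS) = ⋂_{e∈S^{d−1}} {x ∈ ℝ^d : x·e ≤ sup_{y∈A} y·e + c*(e)·t}, where the suprema are taken in ℝ ∪ {+∞} and a half-space condition with infinite right-hand side is vacuous. -/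
open Metric Set Filter
open scoped Topology RealInnerProductSpace Pointwise

noncomputable section

/-- The radial function `w(e) = sup{s ≥ 0 : se ∈ S}` of a set `S`. -/
def radial {d : ℕ} (S : Set (Euc d)) (e : Euc d) : ℝ :=
  sSup {s : ℝ | 0 ≤ s ∧ s • e ∈ S}

/-- `c*(e) = sup_{e' ∈ S^{d-1}} w(e')(e'·e)`. -/
def cstarOf {d : ℕ} (S : Set (Euc d)) (e : Euc d) : ℝ :=
  sSup {c : ℝ | ∃ e' ∈ sphere (0:Euc d) 1, c = radial S e' * ⟪e', e⟫}

/-!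
A convex set is recovered from its support function `e ↦ sup_{y ∈ B} y·e`: by Hahn–Banach and Riesz
representation, a point outside an open convex set (or outside the closure of a convex set) is
separated from it in some unit direction. Support functions are additive under Minkowski sums and
positively homogeneous, and `c*` is the support function of `S` written in polar coordinates, so the
right-hand sides of the half-space conditions are the values of the support function of `A + tS`.
-/

section SupportFunction

variable {E : Type*} [NormedAddCommGroup E] [InnerProductSpace ℝ E] {B : Set E} {e x : E}

/-- The support function `e ↦ sup_{y ∈ B} y·e` of a set `B`, with values in the extended reals so
that it makes sense for unbounded `B`; for empty `B` it is `⊥`. -/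
def supportFun (B : Set E) (e : E) : EReal :=
  ⨆ y ∈ B, ((⟪y, e⟫ : ℝ) : EReal)

lemma inner_le_supportFun (hx : x ∈ B) : ((⟪x, e⟫ : ℝ) : EReal) ≤ supportFun B e :=
  le_iSup₂ (f := fun y (_ : y ∈ B) => ((⟪y, e⟫ : ℝ) : EReal)) x hx

lemma supportFun_le_coe {c : ℝ} (h : ∀ y ∈ B, ⟪y, e⟫ ≤ c) : supportFun B e ≤ (c : EReal) :=
  iSup₂_le fun y hy => EReal.coe_le_coe_iff.2 (h y hy)

@[simp]
lemma supportFun_empty (e : E) : supportFun ∅ e = ⊥ := by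
  simp [supportFun]

lemma supportFun_add (A B : Set E) (e : E) :
    supportFun (A + B) e = supportFun A e + supportFun B e := by
  apply le_antisymm
  · refine iSup₂_le fun y hy => ?_
    obtain ⟨a, ha, b, hb, rfl⟩ := mem_add.1 hy
    rw [inner_add_left, EReal.coe_add]
    exact add_le_add (inner_le_supportFun ha) (inner_le_supportFun hb)
  · refine EReal.add_le_of_forall_lt fun α hα β hβ => ?_
    obtain ⟨a, ha, hαa⟩ := lt_biSup_iff.1 hα
    obtain ⟨b, hb, hβb⟩ := lt_biSup_iff.1 hβ
    calc α + β ≤ ((⟪a, e⟫ : ℝ) : EReal) + ((⟪b, e⟫ : ℝ) : EReal) := add_le_add hαa.le hβb.le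
      _ = ((⟪a + b, e⟫ : ℝ) : EReal) := by rw [inner_add_left, EReal.coe_add]
      _ ≤ supportFun (A + B) e := inner_le_supportFun (add_mem_add ha hb)

lemma supportFun_eq_coe_of_isLUB {c : ℝ} (hB : B.Nonempty)
    (hc : IsLUB ((fun y => ⟪y, e⟫) '' B) c) : supportFun B e = (c : EReal) := by
  have hcoe := EReal.coe_strictMono.monotone.map_csSup_of_continuousAt
    continuous_coe_real_ereal.continuousAt (hB.image fun y => ⟪y, e⟫) hc.bddAbove
  rw [hc.csSup_eq (hB.image _), sSup_image, iSup_image] at hcoe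
  exact hcoe.symm

lemma isLUB_inner_image_smul {c t : ℝ} (ht : 0 ≤ t) (hc : IsLUB ((fun y => ⟪y, e⟫) '' B) c) :
    IsLUB ((fun y => ⟪y, e⟫) '' (t • B)) (t * c) := by
  have himage : (fun y => ⟪y, e⟫) '' (t • B) = (fun r => t * r) '' ((fun y => ⟪y, e⟫) '' B) := by
    simp only [← image_smul, image_image, real_inner_smul_left]
  rw [himage]
  exact hc.mul_left ht

lemma inner_lt_supportFun (hB : IsOpen B) (he : e ≠ 0) (hx : x ∈ B) :
    ((⟪x, e⟫ : ℝ) : EReal) < supportFun B e := by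
  have hline : ∀ᶠ s : ℝ in 𝓝 0, x + s • e ∈ B :=
    (by fun_prop : ContinuousAt (fun s : ℝ => x + s • e) 0).eventually_mem
      (hB.mem_nhds (by simpa using hx))
  obtain ⟨s, hs, hsB⟩ := hline.exists_gt
  refine lt_of_lt_of_le (EReal.coe_lt_coe_iff.2 ?_) (inner_le_supportFun hsB)
  rw [inner_add_left, real_inner_smul_left]
  exact lt_add_of_pos_right _ (mul_pos hs (real_inner_self_pos.2 he))

lemma exists_mem_sphere_inner_eq_mul [CompleteSpace E] {f : StrongDual ℝ E} (hf : f ≠ 0) :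
    ∃ e ∈ sphere (0 : E) 1, ∃ k > 0, ∀ y, ⟪y, e⟫ = k * f y := by
  set v := (InnerProductSpace.toDual ℝ E).symm f with hv
  have hv0 : v ≠ 0 := by simpa [hv] using hf
  refine ⟨‖v‖⁻¹ • v, ?_, ‖v‖⁻¹, inv_pos.2 (norm_pos_iff.2 hv0), fun y => ?_⟩
  · exact mem_sphere_zero_iff_norm.2 (norm_smul_inv_norm (𝕜 := ℝ) hv0)
  · rw [real_inner_smul_right, real_inner_comm, hv, InnerProductSpace.toDual_symm_apply]

variable [CompleteSpace E] [Nontrivial E]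

lemma exists_mem_sphere_supportFun_le_inner (hBo : IsOpen B) (hBc : Convex ℝ B) (hx : x ∉ B) :
    ∃ e ∈ sphere (0 : E) 1, supportFun B e ≤ ((⟪x, e⟫ : ℝ) : EReal) := by
  rcases B.eq_empty_or_nonempty with rfl | ⟨b, hb⟩
  · obtain ⟨e, he⟩ := NormedSpace.sphere_nonempty (x := (0 : E)).2 zero_le_one
    exact ⟨e, he, by simp⟩
  obtain ⟨f, hf⟩ := geometric_hahn_banach_open_point hBc hBo hx
  have hf0 : f ≠ 0 := by
    rintro rfl
    exact lt_irrefl _ (hf b hb)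
  obtain ⟨e, he, k, hk, hek⟩ := exists_mem_sphere_inner_eq_mul hf0
  refine ⟨e, he, supportFun_le_coe fun y hy => ?_⟩
  rw [hek, hek]
  exact mul_le_mul_of_nonneg_left (hf y hy).le hk.le

lemma exists_mem_sphere_supportFun_lt_inner (hBc : Convex ℝ B) (hx : x ∉ closure B) :
    ∃ e ∈ sphere (0 : E) 1, supportFun B e < ((⟪x, e⟫ : ℝ) : EReal) := by
  rcases B.eq_empty_or_nonempty with rfl | ⟨b, hb⟩
  · obtain ⟨e, he⟩ := NormedSpace.sphere_nonempty (x := (0 : E)).2 zero_le_one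
    exact ⟨e, he, by simp⟩
  obtain ⟨f, u, hfu, hux⟩ := geometric_hahn_banach_closed_point hBc.closure isClosed_closure hx
  have hf0 : f ≠ 0 := by
    rintro rfl
    exact lt_irrefl _ ((hfu b (subset_closure hb)).trans hux)
  obtain ⟨e, he, k, hk, hek⟩ := exists_mem_sphere_inner_eq_mul hf0
  have hsup : supportFun B e ≤ ((k * u : ℝ) : EReal) := supportFun_le_coe fun y hy => by
    rw [hek]
    exact mul_le_mul_of_nonneg_left (hfu y (subset_closure hy)).le hk.le
  refine ⟨e, he, hsup.trans_lt (EReal.coe_lt_coe_iff.2 ?_)⟩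
  rw [hek]
  exact mul_lt_mul_of_pos_left hux hk

theorem eq_iInter_inner_lt_supportFun (hBo : IsOpen B) (hBc : Convex ℝ B) :
    B = ⋂ e ∈ sphere (0 : E) 1, {x : E | ((⟪x, e⟫ : ℝ) : EReal) < supportFun B e} := by
  apply Subset.antisymm
  · exact fun x hx => mem_iInter₂.2 fun e he =>
      inner_lt_supportFun hBo (ne_zero_of_mem_unit_sphere ⟨e, he⟩) hx
  · intro x hx
    by_contra hxB
    obtain ⟨e, he, hle⟩ := exists_mem_sphere_supportFun_le_inner hBo hBc hxB
    exact (mem_iInter₂.1 hx e he).not_ge hle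

theorem closure_eq_iInter_inner_le_supportFun (hBc : Convex ℝ B) :
    closure B = ⋂ e ∈ sphere (0 : E) 1, {x : E | ((⟪x, e⟫ : ℝ) : EReal) ≤ supportFun B e} := by
  apply Subset.antisymm
  · refine closure_minimal
      (fun x hx => mem_iInter₂.2 fun e _ => inner_le_supportFun hx)
      (isClosed_biInter fun e _ => isClosed_le ?_ continuous_const)
    exact continuous_coe_real_ereal.comp (by fun_prop)
  · intro x hx
    by_contra hxB
    obtain ⟨e, he, hlt⟩ := exists_mem_sphere_supportFun_lt_inner hBc hxB
    exact (mem_iInter₂.1 hx e he).not_gt hlt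

end SupportFunction

section Radial

variable {d : ℕ} {S : Set (Euc d)} {e v : Euc d} {s b : ℝ}

lemma radial_nonneg (S : Set (Euc d)) (v : Euc d) : 0 ≤ radial S v :=
  Real.sSup_nonneg fun _ hs => hs.1

lemma le_radial (hSb : Bornology.IsBounded S) (hv : v ≠ 0) (hs : 0 ≤ s) (hsv : s • v ∈ S) :
    s ≤ radial S v := by
  obtain ⟨R, hR⟩ := hSb.exists_norm_le
  refine le_csSup ⟨R / ‖v‖, fun r hr => ?_⟩ ⟨hs, hsv⟩
  rw [le_div_iff₀ (norm_pos_iff.2 hv), ← Real.norm_of_nonneg hr.1, ← norm_smul]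
  exact hR _ hr.2

lemma radial_mul_inner_le (hb : 0 ≤ b) (h : ∀ s ∈ S, ⟪s, e⟫ ≤ b) (v : Euc d) :
    radial S v * ⟪v, e⟫ ≤ b := by
  rcases le_or_gt ⟪v, e⟫ 0 with hve | hve
  · exact (mul_nonpos_of_nonneg_of_nonpos (radial_nonneg S v) hve).trans hb
  · rw [← le_div_iff₀ hve]
    refine Real.sSup_le (fun s hs => ?_) (div_nonneg hb hve.le)
    rw [le_div_iff₀ hve, ← real_inner_smul_left]
    exact h _ hs.2

lemma cstarOf_le (hb : 0 ≤ b) (h : ∀ s ∈ S, ⟪s, e⟫ ≤ b) : cstarOf S e ≤ b := by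
  refine Real.sSup_le ?_ hb
  rintro _ ⟨v, -, rfl⟩
  exact radial_mul_inner_le hb h v

lemma radial_mul_inner_le_cstarOf (hSb : Bornology.IsBounded S) (hv : v ∈ sphere (0 : Euc d) 1) :
    radial S v * ⟪v, e⟫ ≤ cstarOf S e := by
  obtain ⟨R, hR, hSR⟩ := hSb.exists_pos_norm_le
  have hbound : ∀ s ∈ S, ⟪s, e⟫ ≤ R * ‖e‖ := fun s hs =>
    (real_inner_le_norm s e).trans (mul_le_mul_of_nonneg_right (hSR s hs) (norm_nonneg e))
  refine le_csSup ⟨R * ‖e‖, ?_⟩ ⟨v, hv, rfl⟩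
  rintro _ ⟨w, -, rfl⟩
  exact radial_mul_inner_le (by positivity) hbound w

lemma cstarOf_nonneg (S : Set (Euc d)) (e : Euc d) : 0 ≤ cstarOf S e := by
  rcases eq_or_ne e 0 with rfl | he
  · refine Real.sSup_nonneg ?_
    rintro _ ⟨v, -, rfl⟩
    rw [inner_zero_right, mul_zero]
  · refine Real.sSup_nonneg' ⟨_, ⟨‖e‖⁻¹ • e, ?_, rfl⟩, mul_nonneg (radial_nonneg S _) ?_⟩
    · exact mem_sphere_zero_iff_norm.2 (norm_smul_inv_norm (𝕜 := ℝ) he)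
    · rw [real_inner_smul_left]
      exact mul_nonneg (by positivity) real_inner_self_nonneg

lemma inner_le_cstarOf (hSb : Bornology.IsBounded S) (hv : v ∈ S) : ⟪v, e⟫ ≤ cstarOf S e := by
  rcases le_or_gt ⟪v, e⟫ 0 with hve | hve
  · exact hve.trans (cstarOf_nonneg S e)
  have hv0 : v ≠ 0 := by
    rintro rfl
    simp at hve
  set u := ‖v‖⁻¹ • v with hu
  have hu1 : ‖u‖ = 1 := norm_smul_inv_norm (𝕜 := ℝ) hv0
  have hvu : ‖v‖ • u = v := smul_inv_smul₀ (norm_ne_zero_iff.2 hv0) v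
  have hnorm_le : ‖v‖ ≤ radial S u :=
    le_radial hSb (norm_ne_zero_iff.1 (by simp [hu1])) (norm_nonneg v) (by rwa [hvu])
  have hue : 0 ≤ ⟪u, e⟫ := by
    rw [hu, real_inner_smul_left]
    positivity
  calc ⟪v, e⟫ = ‖v‖ * ⟪u, e⟫ := by rw [← real_inner_smul_left, hvu]
    _ ≤ radial S u * ⟪u, e⟫ := mul_le_mul_of_nonneg_right hnorm_le hue
    _ ≤ cstarOf S e := radial_mul_inner_le_cstarOf hSb (mem_sphere_zero_iff_norm.2 hu1)

lemma isLUB_cstarOf (hSb : Bornology.IsBounded S) (h0S : (0 : Euc d) ∈ S) (e : Euc d) :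
    IsLUB ((fun s => ⟪s, e⟫) '' S) (cstarOf S e) := by
  refine ⟨forall_mem_image.2 fun s hs => inner_le_cstarOf hSb hs, fun b hb => ?_⟩
  have hle : ∀ s ∈ S, ⟪s, e⟫ ≤ b := fun s hs => hb (mem_image_of_mem _ hs)
  exact cstarOf_le (by simpa using hle 0 h0S) hle

theorem supportFun_add_smul_eq_add_cstarOf_mul (hSb : Bornology.IsBounded S) (h0S : (0 : Euc d) ∈ S)
    (A : Set (Euc d)) {t : ℝ} (ht : 0 ≤ t) (e : Euc d) :
    supportFun (A + t • S) e = supportFun A e + ((cstarOf S e * t : ℝ) : EReal) := by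
  have hS : S.Nonempty := ⟨0, h0S⟩
  rw [supportFun_add, mul_comm, supportFun_eq_coe_of_isLUB hS.smul_set
    (isLUB_inner_image_smul ht (isLUB_cstarOf hSb h0S e))]

end Radial

theorem stmt12_general {d : ℕ} (hd1 : 1 ≤ d) (S : Set (Euc d))
    (hSb : Bornology.IsBounded S) (hSc : Convex ℝ S) (h0S : (0 : Euc d) ∈ S)
    (A : Set (Euc d)) (hAc : Convex ℝ A) (t : ℝ) (ht : 0 ≤ t) :
    (IsOpen A → A + t • S =
      ⋂ e ∈ sphere (0 : Euc d) 1,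
        {x : Euc d | ((⟪x, e⟫ : ℝ) : EReal) <
          supportFun A e + ((cstarOf S e * t : ℝ) : EReal)}) ∧
    closure (A + t • S) =
      ⋂ e ∈ sphere (0 : Euc d) 1,
        {x : Euc d | ((⟪x, e⟫ : ℝ) : EReal) ≤
          supportFun A e + ((cstarOf S e * t : ℝ) : EReal)} := by
  have : Nonempty (Fin d) := Fin.pos_iff_nonempty.1 hd1
  have hconvex : Convex ℝ (A + t • S) := hAc.add (hSc.smul t)
  simp only [← supportFun_add_smul_eq_add_cstarOf_mul hSb h0S A ht]
  exact ⟨fun hAo => eq_iInter_inner_lt_supportFun hAo.add_right hconvex,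
    closure_eq_iInter_inner_le_supportFun hconvex⟩

/-- Lemma 4.5: for open convex `A` and `t ≥ 0`, `A + tS` and its closure are
the intersections of the corresponding open/closed half-spaces (with suprema in `ℝ ∪ {+∞}`,
a half-space condition with infinite right-hand side being vacuous). -/
theorem stmt12 {d : ℕ} (hd1 : 1 ≤ d) (S : Set (Euc d))
    (hSo : IsOpen S) (hSb : Bornology.IsBounded S) (hSc : Convex ℝ S) (h0S : (0:Euc d) ∈ S)
    (A : Set (Euc d)) (hAo : IsOpen A) (hAc : Convex ℝ A) (t : ℝ) (ht : 0 ≤ t) :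
    (A + t • S =
      ⋂ e ∈ sphere (0:Euc d) 1,
        {x : Euc d | ((⟪x, e⟫ : ℝ) : EReal) <
          (⨆ y ∈ A, ((⟪y, e⟫ : ℝ) : EReal)) + ((cstarOf S e * t : ℝ) : EReal)}) ∧
    (closure (A + t • S) =
      ⋂ e ∈ sphere (0:Euc d) 1,
        {x : Euc d | ((⟪x, e⟫ : ℝ) : EReal) ≤
          (⨆ y ∈ A, ((⟪y, e⟫ : ℝ) : EReal)) + ((cstarOf S e * t : ℝ) : EReal)}) := by
  obtain ⟨hopen, hclosure⟩ := stmt12_general hd1 S hSb hSc h0S A hAc t ht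
  exact ⟨hopen hAo, hclosure⟩
end
end

section
/- Let d ≥ 1 and let w : S^{d−1} → (0,∞) be continuous. Define S := {se : e ∈ S^{d−1}, s ∈ [0,w(e))} ⊆ ℝ^d. If for all e,e' ∈ S^{d−1} and all s ∈ (0,1) for which z := s·w(e)e + (1−s)·w(e')e' is nonzero one has w(z/|z|) ≥ |z|, then S is convex. -/
open Metric Set Filter
open scoped Topology RealInnerProductSpace Pointwise

noncomputable section

/-!
The Wulff shape is `[0, 1) • B`, where `B = {w(e)e}` is the radial graph of `w`, and the hypothesis
says that the segment between two points of `B` lies in `[0, 1] • B`. A convex combination of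
`a • u` and `b • v`, with `u, v ∈ B` and `a, b ∈ [0, 1)`, has total weight `t < 1` on `u` and `v`,
so it is `t • z` for some `z` in the segment from `u` to `v`, and
`t • z ∈ t • [0, 1] • B ⊆ [0, 1) • B`.
-/

section OrderedField

variable {𝕜 E : Type*} [Field 𝕜] [LinearOrder 𝕜] [IsStrictOrderedRing 𝕜]
  [AddCommGroup E] [Module 𝕜 E]

theorem segment_subset_Icc_smul_of_openSegment_subset {B : Set E} {u v : E}
    (hu : u ∈ B) (hv : v ∈ B) (huv : openSegment 𝕜 u v ⊆ Icc (0 : 𝕜) 1 • B) :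
    segment 𝕜 u v ⊆ Icc (0 : 𝕜) 1 • B := by
  have subset_smul : B ⊆ Icc (0 : 𝕜) 1 • B := fun x hx ↦
    ⟨1, right_mem_Icc.2 zero_le_one, x, hx, one_smul 𝕜 x⟩
  rw [← insert_endpoints_openSegment]
  exact insert_subset (subset_smul hu) (insert_subset (subset_smul hv) huv)

theorem exists_mem_segment_smul_eq {a b : 𝕜} (ha : 0 ≤ a) (hb : 0 ≤ b) (u v : E) :
    ∃ z ∈ segment 𝕜 u v, (a + b) • z = a • u + b • v := by
  have h : a • u + b • v ∈ (a + b) • segment 𝕜 u v := by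
    rw [(convex_segment u v).add_smul ha hb]
    exact add_mem_add (smul_mem_smul_set (left_mem_segment 𝕜 u v))
      (smul_mem_smul_set (right_mem_segment 𝕜 u v))
  exact mem_smul_set.1 h

theorem convex_Ico_smul_of_openSegment_subset {B : Set E}
    (hB : ∀ u ∈ B, ∀ v ∈ B, openSegment 𝕜 u v ⊆ Icc (0 : 𝕜) 1 • B) :
    Convex 𝕜 (Ico (0 : 𝕜) 1 • B) := by
  rintro _ ⟨a, ha, u, hu, rfl⟩ _ ⟨b, hb, v, hv, rfl⟩ p q hp hq hpq
  have ht : p * a + q * b ∈ Ico (0 : 𝕜) 1 := convex_Ico 0 1 ha hb hp hq hpq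
  obtain ⟨z, hz, hz_eq⟩ :=
    exists_mem_segment_smul_eq (mul_nonneg hp ha.1) (mul_nonneg hq hb.1) u v
  obtain ⟨r, hr, x, hx, rfl⟩ :=
    segment_subset_Icc_smul_of_openSegment_subset hu hv (hB u hu v hv) hz
  refine ⟨(p * a + q * b) * r,
    ⟨mul_nonneg ht.1 hr.1, mul_lt_one_of_nonneg_of_lt_one_left ht.1 ht.2 hr.2⟩, x, hx, ?_⟩
  simpa only [smul_smul] using hz_eq

end OrderedField

section NormedSpace

variable {E : Type*} [NormedAddCommGroup E] [NormedSpace ℝ E]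

/-- The radial graph `{w(e)e : |e| = 1, w(e) > 0}`, from which the Wulff shape is swept out by the
scalars in `[0, 1)`. Directions with `w(e) ≤ 0` contribute nothing to the Wulff shape and are left
out. -/
def radialGraph (w : E → ℝ) : Set E :=
  (fun e ↦ w e • e) '' {e ∈ sphere (0 : E) 1 | 0 < w e}

theorem Ico_smul_radialGraph (w : E → ℝ) :
    Ico (0 : ℝ) 1 • radialGraph w =
      {x | ∃ e ∈ sphere (0 : E) 1, ∃ s : ℝ, 0 ≤ s ∧ s < w e ∧ x = s • e} := by
  ext x
  constructor
  · rintro ⟨t, ⟨ht0, ht1⟩, _, ⟨e, ⟨he, hwe⟩, rfl⟩, rfl⟩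
    exact ⟨e, he, t * w e, mul_nonneg ht0 hwe.le, mul_lt_of_lt_one_left hwe ht1,
      smul_smul t (w e) e⟩
  · rintro ⟨e, he, s, hs0, hsw, rfl⟩
    have hwe : 0 < w e := hs0.trans_lt hsw
    refine ⟨s / w e, ⟨div_nonneg hs0 hwe.le, (div_lt_one hwe).2 hsw⟩, w e • e,
      mem_image_of_mem _ ⟨he, hwe⟩, ?_⟩
    simp only [smul_smul, div_mul_cancel₀ s hwe.ne']

theorem mem_Icc_smul_radialGraph_of_norm_le {w : E → ℝ} {z : E} (hz : z ≠ 0)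
    (hzw : ‖z‖ ≤ w (‖z‖⁻¹ • z)) :
    z ∈ Icc (0 : ℝ) 1 • radialGraph w := by
  have hw : 0 < w (‖z‖⁻¹ • z) := (norm_pos_iff.2 hz).trans_le hzw
  have hsphere : ‖z‖⁻¹ • z ∈ sphere (0 : E) 1 :=
    mem_sphere_zero_iff_norm.2 (norm_smul_inv_norm (𝕜 := ℝ) hz)
  refine ⟨‖z‖ / w (‖z‖⁻¹ • z), ⟨by positivity, div_le_one_of_le₀ hzw hw.le⟩, _,
    mem_image_of_mem _ ⟨hsphere, hw⟩, ?_⟩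
  simp only [smul_smul, ← mul_assoc, div_mul_cancel₀ _ hw.ne',
    mul_inv_cancel₀ (norm_ne_zero_iff.2 hz), one_smul]

theorem stmt13_general (w : E → ℝ)
    (h : ∀ e ∈ sphere (0 : E) 1, 0 < w e → ∀ e' ∈ sphere (0 : E) 1, 0 < w e' →
      ∀ s ∈ Ioo (0 : ℝ) 1, s • (w e • e) + (1 - s) • (w e' • e') ≠ 0 →
        ‖s • (w e • e) + (1 - s) • (w e' • e')‖ ≤
          w (‖s • (w e • e) + (1 - s) • (w e' • e')‖⁻¹ •
            (s • (w e • e) + (1 - s) • (w e' • e')))) :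
    Convex ℝ {x | ∃ e ∈ sphere (0 : E) 1, ∃ s : ℝ, 0 ≤ s ∧ s < w e ∧ x = s • e} := by
  rw [← Ico_smul_radialGraph]
  apply convex_Ico_smul_of_openSegment_subset
  rintro _ ⟨e, ⟨he, hwe⟩, rfl⟩ _ ⟨e', ⟨he', hwe'⟩, rfl⟩ z ⟨s, t, hs, ht, hst, rfl⟩
  obtain rfl : t = 1 - s := eq_sub_of_add_eq' hst
  by_cases hz : s • (w e • e) + (1 - s) • (w e' • e') = 0
  · exact ⟨0, left_mem_Icc.2 zero_le_one, w e • e, mem_image_of_mem _ ⟨he, hwe⟩, by simp [hz]⟩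
  · exact mem_Icc_smul_radialGraph_of_norm_le hz
      (h e he hwe e' he' hwe' s ⟨hs, sub_pos.1 ht⟩ hz)

end NormedSpace

/-- Lemma 4.1: the convexity criterion for the Wulff shape: if
`w(z/|z|) ≥ |z|` for every nonzero convex combination `z` of `w(e)e` and `w(e')e'`, then the
Wulff shape of `w` is convex. -/
theorem stmt13 {d : ℕ} (hd1 : 1 ≤ d) (w : Euc d → ℝ)
    (hw : ContinuousOn w (sphere (0:Euc d) 1))
    (hwpos : ∀ e ∈ sphere (0:Euc d) 1, 0 < w e)
    (h : ∀ e ∈ sphere (0:Euc d) 1, ∀ e' ∈ sphere (0:Euc d) 1, ∀ s ∈ Ioo (0:ℝ) 1,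
      ∀ hz : s • (w e • e) + (1 - s) • (w e' • e') ≠ 0,
        ‖s • (w e • e) + (1 - s) • (w e' • e')‖ ≤
          w (‖s • (w e • e) + (1 - s) • (w e' • e')‖⁻¹ • (s • (w e • e) + (1 - s) • (w e' • e')))) :
    Convex ℝ (wulff w) :=
  stmt13_general w fun e he _ e' he' _ ↦ h e he e' he'
end
end

section
/- Let d ≥ 1, l₁,…,l_d > 0, and let U : ℝ×ℝ^d → ℝ be C¹ with U(s, x + l_i e_i) = U(s,x) for each i and all (s,x) (where {e_i} is the standard basis), ∂_s U(s,x) < 0 for all (s,x), and U(s,x) → 1 as s → −∞ and U(s,x) → 0 as s → +∞, both uniformly in x. Let c > 0, e ∈ S^{d−1}, and define u(t,x) := U(x·e − ct, x). Then for every η ∈ (0,1/2) there exists m_η > 0 such that ∂_t u(t,x) ≥ m_η for all (t,x) ∈ ℝ×ℝ^d with u(t,x) ∈ [η, 1−η]. -/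
open Metric Set Filter
open scoped Topology RealInnerProductSpace

noncomputable section

/-!
Because `U` tends uniformly to its limits at `±∞`, its values in a closed interval strictly between
the two limits are attained only for `s` in a fixed compact interval. By periodicity, `x` may be
taken in a bounded fundamental domain of the period lattice. On the resulting compact set the
continuous positive function `-∂ₛU` is bounded below by some `m > 0`, and `∂ₜu = -c ∂ₛU ≥ c m`.
-/

section Periodic

variable {E Y : Type*}

theorem periodic_of_mem_span_int_s17 [AddCommGroup E] {f : E → Y} {S : Set E}
    (hf : ∀ v ∈ S, Function.Periodic f v) {v : E} (hv : v ∈ Submodule.span ℤ S) :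
    Function.Periodic f v := by
  induction hv using Submodule.span_induction with
  | mem v hv => exact hf v hv
  | zero => exact Function.periodic_with_period_zero f
  | add v w _ _ hv hw => exact hv.add_period hw
  | smul n v _ hv => exact hv.zsmul n

variable {ι : Type*} [NormedAddCommGroup E] [NormedSpace ℝ E]

theorem apply_fract_eq_of_periodic [Fintype ι] {f : E → Y} (b : Module.Basis ι ℝ E)
    (hf : ∀ i, Function.Periodic f (b i)) (x : E) : f (ZSpan.fract b x) = f x :=
  (periodic_of_mem_span_int_s17 (forall_mem_range.2 hf) (ZSpan.floor b x).2).sub_eq x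

theorem exists_pos_forall_le_of_periodic [Finite ι] {X : Type*} [TopologicalSpace X]
    {g : X → E → ℝ} (hg : Continuous (Function.uncurry g)) (b : Module.Basis ι ℝ E)
    (hper : ∀ i s, Function.Periodic (g s) (b i)) {K : Set X} (hK : IsCompact K)
    (hpos : ∀ s ∈ K, ∀ x, 0 < g s x) :
    ∃ m > 0, ∀ s ∈ K, ∀ x, m ≤ g s x := by
  have := Fintype.ofFinite ι
  have : FiniteDimensional ℝ E := b.finiteDimensional_of_finite
  have : ProperSpace E := FiniteDimensional.proper ℝ E
  obtain ⟨m, hm, hle⟩ := (hK.prod (isCompact_closedBall (0 : E) (∑ i, ‖b i‖))).exists_forall_le'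
    hg.continuousOn fun p hp => hpos p.1 hp.1 p.2
  refine ⟨m, hm, fun s hs x => ?_⟩
  rw [← apply_fract_eq_of_periodic b (hper · s)]
  exact hle (s, ZSpan.fract b x) ⟨hs, mem_closedBall_zero_iff.2 (ZSpan.norm_fract_le b x)⟩

end Periodic

theorem eventually_forall_mem_of_tendstoUniformly_const {ι X Y : Type*} [UniformSpace Y]
    {U : ι → X → Y} {p : Filter ι} {a : Y} (hU : TendstoUniformly U (fun _ => a) p) {N : Set Y}
    (hN : N ∈ 𝓝 a) : ∀ᶠ s in p, ∀ x, U s x ∈ N :=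
  mem_prod_top.1 (tendsto_prod_top_iff.2 hU hN)

theorem exists_forall_mem_Icc_of_tendstoUniformly {ι X Y : Type*} [LinearOrder ι] [Nonempty ι]
    [UniformSpace Y] [LinearOrder Y] [OrderClosedTopology Y] {U : ι → X → Y} {L R α β : Y}
    (hbot : TendstoUniformly U (fun _ => L) atBot) (htop : TendstoUniformly U (fun _ => R) atTop)
    (hα : R < α) (hβ : β < L) :
    ∃ A B, ∀ s x, U s x ∈ Icc α β → s ∈ Icc A B := by
  obtain ⟨A, hA⟩ := eventually_atBot.1
    (eventually_forall_mem_of_tendstoUniformly_const hbot (Ioi_mem_nhds hβ))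
  obtain ⟨B, hB⟩ := eventually_atTop.1
    (eventually_forall_mem_of_tendstoUniformly_const htop (Iio_mem_nhds hα))
  refine ⟨A, B, fun s x hs => ⟨?_, ?_⟩⟩
  · by_contra! hsA
    exact (hA s hsA.le x).not_ge hs.2
  · by_contra! hBs
    exact (hB s hBs.le x).not_ge hs.1

theorem continuous_deriv_fst_of_contDiff {𝕜 E F : Type*} [NontriviallyNormedField 𝕜]
    [NormedAddCommGroup E] [NormedSpace 𝕜 E] [NormedAddCommGroup F] [NormedSpace 𝕜 F]
    {U : 𝕜 → E → F} (hU : ContDiff 𝕜 1 fun p : 𝕜 × E => U p.1 p.2) :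
    Continuous fun p : 𝕜 × E => deriv (fun s => U s p.2) p.1 := by
  have hswap : ContDiff 𝕜 1 (Function.uncurry fun (p : 𝕜 × E) s => U s p.2) :=
    hU.comp (contDiff_snd.prodMk (contDiff_snd.comp contDiff_fst))
  exact (Continuous.fderiv_one hswap continuous_fst).clm_apply continuous_const

theorem deriv_comp_const_sub_mul {𝕜 F : Type*} [NontriviallyNormedField 𝕜]
    [NormedAddCommGroup F] [NormedSpace 𝕜 F] (f : 𝕜 → F) (a c t : 𝕜) :
    deriv (fun s => f (a - c * s)) t = -c • deriv f (a - c * t) := by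
  rw [deriv_comp_mul_left c (fun s => f (a - s)), deriv_comp_const_sub, smul_neg, neg_smul]

theorem stmt17_general {ι E : Type*} [Finite ι] [NormedAddCommGroup E] [NormedSpace ℝ E]
    (b : Module.Basis ι ℝ E) {U : ℝ → E → ℝ}
    (hcont : Continuous fun p : ℝ × E => deriv (fun s => U s p.2) p.1)
    (hper : ∀ i s, Function.Periodic (U s) (b i))
    (hdec : ∀ s x, deriv (fun s' => U s' x) s < 0) {L R : ℝ}
    (hbot : TendstoUniformly U (fun _ => L) atBot) (htop : TendstoUniformly U (fun _ => R) atTop)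
    (φ : E → ℝ) {c : ℝ} (hc : 0 < c) {α β : ℝ} (hα : R < α) (hβ : β < L) :
    ∃ m > 0, ∀ t x, U (φ x - c * t) x ∈ Icc α β → m ≤ deriv (fun s => U (φ x - c * s) x) t := by
  obtain ⟨A, B, hAB⟩ := exists_forall_mem_Icc_of_tendstoUniformly hbot htop hα hβ
  have hderiv_per (i s) : Function.Periodic (fun x => -deriv (fun s' => U s' x) s) (b i) :=
    fun x => by simp only [hper i _ x]
  obtain ⟨m, hm, hle⟩ := exists_pos_forall_le_of_periodic hcont.neg b hderiv_per
    (isCompact_Icc (a := A) (b := B)) fun s _ x => neg_pos.2 (hdec s x)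
  refine ⟨c * m, mul_pos hc hm, fun t x hx => ?_⟩
  calc c * m ≤ c * -deriv (fun s => U s x) (φ x - c * t) := by
        gcongr
        exact hle _ (hAB _ x hx) x
    _ = deriv (fun s => U (φ x - c * s) x) t := by
        rw [deriv_comp_const_sub_mul (fun s => U s x), smul_eq_mul, neg_mul_comm]

/-- uniform positivity of the time derivative of a pulsating front
`u(t,x) = U(x·e − ct,x)` on intermediate level sets. -/
theorem stmt17 {d : ℕ} (hd1 : 1 ≤ d) (l : Fin d → ℝ) (hl : ∀ i, 0 < l i)
    (U : ℝ → Euc d → ℝ)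
    (hU1 : ContDiff ℝ 1 fun p : ℝ × Euc d => U p.1 p.2)
    (hUper : ∀ i : Fin d, ∀ (s : ℝ) (x : Euc d),
      U s (x + l i • EuclideanSpace.single i 1) = U s x)
    (hUdec : ∀ (s : ℝ) (x : Euc d), deriv (fun s' => U s' x) s < 0)
    (hUbot : TendstoUniformly U (fun _ => (1:ℝ)) atBot)
    (hUtop : TendstoUniformly U (fun _ => (0:ℝ)) atTop)
    (c : ℝ) (hc : 0 < c) (e : Euc d) (he : e ∈ sphere (0:Euc d) 1) :
    ∀ η : ℝ, 0 < η → η < 1/2 → ∃ mη : ℝ, 0 < mη ∧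
      ∀ (t : ℝ) (x : Euc d), U (⟪x, e⟫ - c * t) x ∈ Icc η (1-η) →
        mη ≤ deriv (fun s : ℝ => U (⟪x, e⟫ - c * s) x) t := by
  intro η hη _
  let b := (EuclideanSpace.basisFun (Fin d) ℝ).toBasis.isUnitSMul fun i => (hl i).ne'.isUnit
  have hper (i s) : Function.Periodic (U s) (b i) := fun x => by
    simpa [b, Module.Basis.isUnitSMul_apply] using hUper i s x
  exact stmt17_general b (continuous_deriv_fst_of_contDiff hU1) hper hUdec hUbot hUtop
    (⟪·, e⟫) hc hη (sub_lt_self 1 hη)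
end
end
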